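/- arXiv:2206.11099 — 2 statements merged into one kernel-verified Lean document; each statement's English description precedes it below -/
import Mathlib

section
/- Every completely normal generalized spectral space with at most ℵ₁ compact open sets embeds, as a spectral subspace, into the ℓ-spectrum of some Abelian ℓ-group. -/
universe u

/-- An Abelian `ℓ`-group: an abelian group endowed with a translation-invariant
lattice order. -/
structure AbelianLGroup where
  carrier : Type u
  [lat : Lattice carrier]
  [grp : AddCommGroup carrier]
  add_le_add_left' : ∀ a b : carrier, a ≤ b → ∀ c : carrier, c + a ≤ c + b

attribute [instance] AbelianLGroup.lat AbelianLGroup.grp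

/-- An `ℓ`-ideal of an Abelian `ℓ`-group: an order-convex subgroup closed under the
lattice operations, equivalently a subgroup `P` such that `|x| ≤ |y|` and `y ∈ P`
imply `x ∈ P` (here `|x| = x ⊔ -x`). -/
def IsLIdeal {G : Type*} [Lattice G] [AddCommGroup G] (P : Set G) : Prop :=
  (0 : G) ∈ P ∧ (∀ x y : G, x ∈ P → y ∈ P → x + y ∈ P) ∧ (∀ x : G, x ∈ P → -x ∈ P) ∧
    (∀ x y : G, y ∈ P → x ⊔ -x ≤ y ⊔ -y → x ∈ P)

/-- A prime `ℓ`-ideal: a proper `ℓ`-ideal `P` with `x ⊓ y ∈ P → x ∈ P ∨ y ∈ P`. -/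
def IsPrimeLIdeal {G : Type*} [Lattice G] [AddCommGroup G] (P : Set G) : Prop :=
  IsLIdeal P ∧ P ≠ Set.univ ∧ ∀ x y : G, x ⊓ y ∈ P → x ∈ P ∨ y ∈ P

/-- The `ℓ`-spectrum of an Abelian `ℓ`-group: the set of its prime `ℓ`-ideals. -/
def LSpectrum (G : Type*) [Lattice G] [AddCommGroup G] : Type _ :=
  {P : Set G // IsPrimeLIdeal P}

/-- The hull-kernel topology on the `ℓ`-spectrum: the closed sets are the sets
`{P : X ⊆ P}` for `X ⊆ G`; equivalently, the topology is generated by the basic open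
sets `{P : a ∉ P}` for `a ∈ G`. -/
instance (G : Type*) [Lattice G] [AddCommGroup G] : TopologicalSpace (LSpectrum G) :=
  TopologicalSpace.generateFrom {U : Set (LSpectrum G) | ∃ a : G, U = {P | a ∉ P.1}}

section Extension

variable {X V : Type*}

/-- A completely normal distributive `0`-lattice of subsets of `X`. -/
structure IsCompletelyNormalFamily (K : Set (Set X)) : Prop where
  empty : ∅ ∈ K
  inter : ∀ U ∈ K, ∀ W ∈ K, U ∩ W ∈ K
  union : ∀ U ∈ K, ∀ W ∈ K, U ∪ W ∈ K
  split : ∀ U ∈ K, ∀ W ∈ K, ∃ A ∈ K, ∃ B ∈ K, U ∪ W = U ∪ B ∧ U ∪ W = A ∪ W ∧ A ∩ B = ∅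

variable {K : Set (Set X)}

lemma IsCompletelyNormalFamily.forall_le_mem (hK : IsCompletelyNormalFamily K)
    {A : ℕ → Set X} (n : ℕ) (hA : ∀ i ≤ n, A i ∈ K) : {x | ∀ i ≤ n, x ∈ A i} ∈ K := by
  induction n with
  | zero => simpa using hA 0
  | succ n ih =>
    convert hK.inter _ (ih fun i hi => hA i (by omega)) _ (hA (n + 1) le_rfl) using 1
    ext x
    simp only [Set.mem_ofPred_eq, Set.mem_inter_iff]
    refine ⟨fun h => ⟨fun i hi => h i (by omega), h _ le_rfl⟩, fun h i hi => ?_⟩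
    rcases Nat.lt_or_eq_of_le hi with hi | rfl
    exacts [h.1 i (by omega), h.2]

lemma IsCompletelyNormalFamily.exists_disjoint_subset (hK : IsCompletelyNormalFamily K)
    {U W : Set X} (hU : U ∈ K) (hW : W ∈ K) :
    ∃ A ∈ K, ∃ B ∈ K, A ⊆ U ∧ B ⊆ W ∧ (∀ x ∈ A, x ∉ B) ∧
      (∀ x ∈ U, x ∉ W → x ∈ A) ∧ ∀ x ∈ W, x ∉ U → x ∈ B := by
  obtain ⟨A, hA, B, hB, h1, h2, h3⟩ := hK.split U hU W hW
  simp only [Set.ext_iff, Set.mem_union, Set.mem_inter_iff, Set.mem_empty_iff_false] at h1 h2 h3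
  refine ⟨A ∩ U, hK.inter _ hA _ hU, B ∩ W, hK.inter _ hB _ hW, Set.inter_subset_right,
    Set.inter_subset_right, ?_, ?_, ?_⟩ <;> intro x <;> have := h1 x <;> have := h2 x <;>
    have := h3 x <;> simp only [Set.mem_inter_iff] <;> tauto

/-- A sequence with prescribed pairwise relations exists as soon as every finite initial part
can be prolonged by one term. -/
lemma exists_seq_pairwise {β : Type*} [Nonempty β] (R : ℕ → ℕ → β → β → Prop)
    (hR : ∀ (n : ℕ) (p : ℕ → β), (∀ i < n, ∀ j < n, R i j (p i) (p j)) →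
      ∃ b, R n n b b ∧ ∀ i < n, R i n (p i) b ∧ R n i b (p i)) :
    ∃ p : ℕ → β, ∀ i j, R i j (p i) (p j) := by
  classical
  have hR' : ∀ (n : ℕ) (p : ℕ → β), ∃ b, (∀ i < n, ∀ j < n, R i j (p i) (p j)) →
      R n n b b ∧ ∀ i < n, R i n (p i) b ∧ R n i b (p i) := by
    intro n p
    by_cases hp : ∀ i < n, ∀ j < n, R i j (p i) (p j)
    · obtain ⟨b, hb⟩ := hR n p hp
      exact ⟨b, fun _ => hb⟩
    · exact ⟨Classical.arbitrary β, fun h => absurd h hp⟩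
  choose next hnext using hR'
  obtain ⟨p, hp⟩ : ∃ p : ℕ → β,
      ∀ n, p n = next n fun i => if i < n then p i else Classical.arbitrary β := by
    refine ⟨Nat.lt_wfRel.wf.fix fun n rec => next n fun i =>
      if hi : i < n then rec i hi else Classical.arbitrary β, fun n => ?_⟩
    rw [WellFounded.fix_eq]
    rfl
  have main : ∀ n, ∀ i < n, ∀ j < n, R i j (p i) (p j) := by
    intro n
    induction n with
    | zero => intro i hi; omega
    | succ n ih =>
      have hstep := hnext n (fun i => if i < n then p i else Classical.arbitrary β)
        (fun i hi j hj => by simpa [hi, hj] using ih i hi j hj)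
      rw [← hp n] at hstep
      have hlt : ∀ i < n, R i n (p i) (p n) ∧ R n i (p n) (p i) :=
        fun i hi => by simpa [hi] using hstep.2 i hi
      intro i hi j hj
      rcases Nat.lt_succ_iff_lt_or_eq.1 hi with hi | rfl <;>
        rcases Nat.lt_succ_iff_lt_or_eq.1 hj with hj | rfl
      exacts [ih i hi j hj, (hlt i hi).1, (hlt j hj).2, hstep.1]
  exact ⟨p, fun i j => main (max i j + 1) i (by omega) j (by omega)⟩

variable [AddCommGroup V] [Module ℚ V]

/-- A family `(≤ₓ)` of total vector space preorders on `W`, indexed by the points `x` of `X`, such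
that `h a = {x | 0 <ₓ a}` belongs to `K` for every `a ∈ W`. -/
structure IsOrderFamilyOn (K : Set (Set X)) (W : Submodule ℚ V) (h : V → Set X) : Prop where
  mem : ∀ a ∈ W, h a ∈ K
  zero : ∀ x, x ∉ h 0
  neg : ∀ a ∈ W, ∀ x ∈ h a, x ∉ h (-a)
  add : ∀ a ∈ W, ∀ b ∈ W, ∀ x ∈ h (a + b), x ∈ h a ∨ x ∈ h b
  smul : ∀ a ∈ W, ∀ r : ℚ, 0 < r → h (r • a) = h a

/-- A family of cuts of the preorders given by `h`, at which an element `t` may be inserted: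
`F u = {x | u <ₓ t}` and `G u = {x | t <ₓ u}`. -/
structure IsCutOn (K : Set (Set X)) (W : Submodule ℚ V) (h F G : V → Set X) : Prop where
  mem_left : ∀ u ∈ W, F u ∈ K
  mem_right : ∀ u ∈ W, G u ∈ K
  disjoint : ∀ u ∈ W, ∀ x ∈ F u, x ∉ G u
  left : ∀ u ∈ W, ∀ v ∈ W, ∀ x ∈ F u, x ∈ F v ∨ x ∈ h (v - u)
  right : ∀ u ∈ W, ∀ v ∈ W, ∀ x ∈ G u, x ∈ G v ∨ x ∈ h (u - v)
  between : ∀ u ∈ W, ∀ v ∈ W, ∀ x ∈ h (u - v), x ∈ G u ∨ x ∈ F v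

variable {W : Submodule ℚ V} {h : V → Set X}

lemma IsOrderFamilyOn.sub (hh : IsOrderFamilyOn K W h) {u v w : V} (hu : u ∈ W) (hv : v ∈ W)
    (hw : w ∈ W) {x : X} (hx : x ∈ h (u - w)) : x ∈ h (u - v) ∨ x ∈ h (v - w) :=
  hh.add _ (W.sub_mem hu hv) _ (W.sub_mem hv hw) x (by rwa [sub_add_sub_cancel])

/-- Over a countable space, a cut can be prescribed arbitrarily at `0`. -/
lemma IsOrderFamilyOn.exists_cut (hK : IsCompletelyNormalFamily K) (hh : IsOrderFamilyOn K W h)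
    [Countable W] {c : Set X} (hc : c ∈ K) : ∃ F G : V → Set X, F 0 = c ∧ IsCutOn K W h F G := by
  obtain ⟨e, he0, he, he'⟩ : ∃ e : ℕ → V, e 0 = 0 ∧ (∀ n, e n ∈ W) ∧
      ∀ u : V, ∃ n, u ∈ W → e n = u := by
    obtain ⟨f, hf⟩ := exists_surjective_nat W
    refine ⟨fun n => Nat.casesOn n 0 fun m => f m, rfl, ?_, fun u => ?_⟩
    · rintro (_ | n)
      exacts [W.zero_mem, (f n).2]
    · by_cases hu : u ∈ W
      · obtain ⟨n, hn⟩ := hf ⟨u, hu⟩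
        exact ⟨n + 1, fun _ => congrArg Subtype.val hn⟩
      · exact ⟨0, fun h => absurd h hu⟩
  let R : ℕ → ℕ → Set X × Set X → Set X × Set X → Prop := fun i j b b' =>
    (i = 0 → b.1 = c) ∧ b.1 ∈ K ∧ b.2 ∈ K ∧ (∀ x ∈ b.1, x ∉ b.2) ∧
    (∀ x ∈ b.1, x ∈ b'.1 ∨ x ∈ h (e j - e i)) ∧ (∀ x ∈ b.2, x ∈ b'.2 ∨ x ∈ h (e i - e j)) ∧
    ∀ x ∈ h (e i - e j), x ∈ b.2 ∨ x ∈ b'.1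
  obtain ⟨p, hp⟩ : ∃ p : ℕ → Set X × Set X, ∀ i j, R i j (p i) (p j) := by
    apply exists_seq_pairwise
    rintro (_ | n) p hp
    · refine ⟨(c, ∅), ?_, by simp⟩
      simp only [R, sub_self]
      exact ⟨by simp, hc, hK.empty, by simp, by simp +contextual, by simp,
        fun x hx => absurd hx (hh.zero x)⟩
    have hmem : ∀ i j, h (e i - e j) ∈ K := fun i j => hh.mem _ (W.sub_mem (he i) (he j))
    have hsub : ∀ i j k x, x ∈ h (e i - e k) → x ∈ h (e i - e j) ∨ x ∈ h (e j - e k) :=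
      fun i j k x => hh.sub (he i) (he j) (he k)
    have hP : ∀ i ≤ n, ∀ j ≤ n, R i j (p i) (p j) :=
      fun i hi j hj => hp i (by omega) j (by omega)
    have hUF := hK.forall_le_mem (A := fun i => (p i).1 ∪ h (e i - e (n + 1))) n
      fun i hi => hK.union _ (hP i hi i hi).2.1 _ (hmem _ _)
    have hUG := hK.forall_le_mem (A := fun i => (p i).2 ∪ h (e (n + 1) - e i)) n
      fun i hi => hK.union _ (hP i hi i hi).2.2.1 _ (hmem _ _)
    obtain ⟨A, hA, B, hB, hAU, hBU, hAB, hUA, hUB⟩ := hK.exists_disjoint_subset hUF hUG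
    simp only [Set.mem_ofPred_eq, Set.mem_union, Set.subset_def] at hAU hBU hUA hUB
    have hz : ∀ i x, x ∉ h (e i - e i) := fun i x => by rw [sub_self]; exact hh.zero x
    refine ⟨(A, B), ⟨by simp, hA, hB, hAB, by simp +contextual, by simp +contextual,
      fun x hx => absurd hx (hz _ x)⟩, fun i hi => ?_⟩
    replace hi : i ≤ n := by omega
    refine ⟨⟨(hP i hi i hi).1, (hP i hi i hi).2.1, (hP i hi i hi).2.2.1, (hP i hi i hi).2.2.2.1,
      fun x hx => ?_, fun x hx => ?_, fun x hx => ?_⟩, by simp, hA, hB, hAB,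
      fun x hx => hAU x hx i hi, fun x hx => hBU x hx i hi, fun x hx => ?_⟩
    all_goals
      by_contra! hcon
      obtain ⟨hc1, hc2⟩ := hcon
    · refine hc1 (hUA x (fun j hj => ?_) fun hG => ?_)
      · have := hsub j (n + 1) i x
        have := (hP i hi j hj).2.2.2.2.1 x hx
        tauto
      · have := hG i hi
        have := (hP i hi i hi).2.2.2.1 x hx
        tauto
    · refine hc1 (hUB x (fun j hj => ?_) fun hF => ?_)
      · have := hsub i (n + 1) j x
        have := (hP i hi j hj).2.2.2.2.2.1 x hx
        tauto
      · have := hF i hi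
        have := (hP i hi i hi).2.2.2.1 x
        tauto
    · have hlt := hh.neg _ (W.sub_mem (he i) (he (n + 1))) x hx
      rw [neg_sub] at hlt
      refine hc2 (hUA x (fun j hj => ?_) fun hG => ?_)
      · have := hsub i j (n + 1) x hx
        have := (hP i hi j hj).2.2.2.2.2.2 x
        tauto
      · have := hG i hi
        tauto
    · have hlt := hh.neg _ (W.sub_mem (he (n + 1)) (he i)) x hx
      rw [neg_sub] at hlt
      refine hc1 (hUB x (fun j hj => ?_) fun hF => ?_)
      · have := hsub (n + 1) j i x hx
        have := (hP j hj i hi).2.2.2.2.2.2 x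
        tauto
      · have := hF i hi
        tauto
  choose idx hidx using he'
  refine ⟨fun u => (p (idx u)).1, fun u => (p (idx u)).2, ?_, ?_⟩
  · have h0 : e (idx 0) = e 0 := (hidx 0 W.zero_mem).trans he0.symm
    rw [← (hp 0 0).1 rfl]
    ext x
    have h1 := (hp (idx 0) 0).2.2.2.2.1 x
    have h2 := (hp 0 (idx 0)).2.2.2.2.1 x
    have h3 := hh.zero x
    rw [h0, sub_self] at h1 h2
    tauto
  · refine ⟨fun u _ => (hp (idx u) 0).2.1, fun u _ => (hp (idx u) 0).2.2.1,
      fun u _ => (hp (idx u) 0).2.2.2.1, fun u hu v hv => ?_, fun u hu v hv => ?_,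
      fun u hu v hv => ?_⟩
    all_goals have key := hp (idx u) (idx v)
    all_goals simp only [R, hidx u hu, hidx v hv] at key
    exacts [key.2.2.2.2.1, key.2.2.2.2.2.1, key.2.2.2.2.2.2]

open Classical in
/-- The positivity sets of `a ∈ W ⊕ ℚ t`, where `q a` is the coefficient of `t` and `t` is inserted
at the cut `(F, G)`. -/
noncomputable def insertAtCut (h F G : V → Set X) (q : V →ₗ[ℚ] ℚ) (t a : V) : Set X :=
  if 0 < q a then F (t - (q a)⁻¹ • a) else if q a < 0 then G (t - (q a)⁻¹ • a) else h a

/-- Inserting a new element at a cut yields an order family on the larger space. -/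
lemma IsOrderFamilyOn.insertAtCut (hh : IsOrderFamilyOn K W h) {F G : V → Set X}
    (hFG : IsCutOn K W h F G) {W' : Submodule ℚ V} {q : V →ₗ[ℚ] ℚ} {t : V}
    (hW' : ∀ a ∈ W', a - q a • t ∈ W) :
    IsOrderFamilyOn K W' (insertAtCut h F G q t) := by
  have hu : ∀ a ∈ W', q a ≠ 0 → t - (q a)⁻¹ • a ∈ W := by
    intro a ha hq
    have := W.smul_mem (-(q a)⁻¹) (hW' a ha)
    rwa [smul_sub, smul_smul, neg_mul, inv_mul_cancel₀ hq, neg_smul, neg_smul, one_smul,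
      sub_neg_eq_add, neg_add_eq_sub] at this
  have hu0 : ∀ a ∈ W', q a = 0 → a ∈ W := by
    intro a ha hq
    simpa [hq] using hW' a ha
  have hle : ∀ a ∈ W, ∀ r : ℚ, 0 ≤ r → ∀ x, x ∉ h a → x ∉ h (r • a) := by
    intro a ha r hr x hx
    rcases hr.eq_or_lt with rfl | hr
    · rw [zero_smul]; exact hh.zero x
    · rwa [hh.smul a ha r hr]
  have Fmono : ∀ u ∈ W, ∀ w ∈ W, ∀ x, x ∉ F u → x ∉ h (u - w) → x ∉ F w :=
    fun u hu w hw x h1 h2 h3 => (hFG.left w hw u hu x h3).elim h1 h2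
  have Gmono : ∀ u ∈ W, ∀ w ∈ W, ∀ x, x ∉ G u → x ∉ h (w - u) → x ∉ G w :=
    fun u hu w hw x h1 h2 h3 => (hFG.right w hw u hu x h3).elim h1 h2
  have FG : ∀ u ∈ W, ∀ v ∈ W, ∀ x, x ∉ F u → x ∉ G v → x ∉ h (v - u) :=
    fun u hu v hv x h1 h2 h3 => (hFG.between v hv u hu x h3).elim h2 h1
  refine ⟨fun a ha => ?_, fun x => ?_, fun a ha x hx => ?_, fun a ha b hb x hx => ?_,
    fun a ha r hr => ?_⟩
  · unfold _root_.insertAtCut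
    split_ifs with h1 h2
    · exact hFG.mem_left _ (hu a ha h1.ne')
    · exact hFG.mem_right _ (hu a ha h2.ne)
    · exact hh.mem _ (hu0 a ha (by linarith))
  · simpa [_root_.insertAtCut] using hh.zero x
  · unfold _root_.insertAtCut at hx ⊢
    rcases lt_trichotomy (q a) 0 with h1 | h1 | h1
    · simp only [h1, h1.not_gt, if_true, if_false, map_neg, Left.neg_pos_iff, inv_neg, neg_smul_neg]
        at hx ⊢
      exact fun h2 => hFG.disjoint _ (hu a ha h1.ne) x h2 hx
    · simp only [h1, lt_irrefl, if_false, map_neg, neg_zero] at hx ⊢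
      exact hh.neg a (hu0 a ha h1) x hx
    · simp only [h1, h1.not_gt, if_true, if_false, map_neg, Left.neg_pos_iff, inv_neg,
        neg_smul_neg, Left.neg_neg_iff] at hx ⊢
      exact hFG.disjoint _ (hu a ha h1.ne') x hx
  · by_contra! hcon
    obtain ⟨hxa, hxb⟩ := hcon
    wlog hab : q b ≤ q a generalizing a b
    · exact this b hb a ha (by rwa [add_comm]) hxb hxa (le_of_not_ge hab)
    have ha0 := hu0 a ha
    have hb0 := hu0 b hb
    have hsum := W'.add_mem ha hb
    have hq : q (a + b) = q a + q b := map_add q a b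
    have hua := hu a ha
    have hub := hu b hb
    have hus := hu _ hsum
    unfold _root_.insertAtCut at hx hxa hxb
    rw [hq] at hx hus
    generalize q a = α at *
    generalize q b = β at *
    rcases lt_trichotomy β 0 with hβ | rfl | hβ
    · rw [if_neg hβ.not_gt, if_pos hβ] at hxb
      have hβ' := hβ.ne
      replace hub := hub hβ'
      rcases lt_trichotomy α 0 with hα | rfl | hα
      · rw [if_neg hα.not_gt, if_pos hα] at hxa
        have hα' := hα.ne
        replace hua := hua hα'
        have hs : α + β < 0 := by linarith
        have hs' := hs.ne
        replace hus := hus hs'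
        rw [if_neg hs.not_gt, if_pos hs] at hx
        have hd := hh.neg _ (W.sub_mem hua hub) x
        rw [neg_sub] at hd
        by_cases hd' : x ∈ h ((t - α⁻¹ • a) - (t - β⁻¹ • b))
        · refine Gmono _ hua _ hus x hxa ?_ hx
          convert hle _ (W.sub_mem hub hua) (β / (α + β)) (div_nonneg_of_nonpos hβ.le hs.le) x
            (hd hd') using 3
          match_scalars <;> field_simp <;> ring
        · refine Gmono _ hub _ hus x hxb ?_ hx
          convert hle _ (W.sub_mem hua hub) (α / (α + β)) (div_nonneg_of_nonpos hα.le hs.le) x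
            hd' using 3
          match_scalars <;> field_simp <;> ring
      · rw [if_neg (lt_irrefl _), if_neg (lt_irrefl _)] at hxa
        rw [zero_add, if_neg hβ.not_gt, if_pos hβ] at hx
        rw [zero_add] at hus
        refine Gmono _ hub _ (hus hβ.ne) x hxb ?_ hx
        convert hle a (ha0 rfl) (-β⁻¹) (by simpa using hβ.le) x hxa using 3
        match_scalars <;> ring
      · rw [if_pos hα] at hxa
        replace hua := hua hα.ne'
        have hvu := FG _ hua _ hub x hxa hxb
        rcases lt_trichotomy (α + β) 0 with hs | hs | hs
        · have hs' := hs.ne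
          replace hus := hus hs'
          rw [if_neg hs.not_gt, if_pos hs] at hx
          refine Gmono _ hub _ hus x hxb ?_ hx
          convert hle _ (W.sub_mem hub hua) (-α / (α + β))
            (div_nonneg_of_nonpos (by linarith) hs.le) x hvu using 3
          match_scalars <;> field_simp <;> ring
        · rw [hs, if_neg (lt_irrefl _), if_neg (lt_irrefl _)] at hx
          refine hle _ (W.sub_mem hub hua) α hα.le x hvu ?_
          convert hx using 2
          obtain rfl : β = -α := by linarith
          match_scalars <;> field_simp
          ring
        · replace hus := hus hs.ne'
          rw [if_pos hs] at hx
          refine Fmono _ hua _ hus x hxa ?_ hx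
          convert hle _ (W.sub_mem hub hua) (-β / (α + β))
            (div_nonneg (by linarith) hs.le) x hvu using 3
          match_scalars <;> field_simp <;> ring
    · rw [if_neg (lt_irrefl _), if_neg (lt_irrefl _)] at hxb
      rw [add_zero] at hx hus
      rcases hab.eq_or_lt with rfl | hα
      · rw [if_neg (lt_irrefl _), if_neg (lt_irrefl _)] at hxa hx
        exact (hh.add a (ha0 rfl) b (hb0 rfl) x hx).elim hxa hxb
      · rw [if_pos hα] at hxa hx
        refine Fmono _ (hua hα.ne') _ (hus hα.ne') x hxa ?_ hx
        convert hle b (hb0 rfl) α⁻¹ (by simpa using hα.le) x hxb using 3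
        match_scalars <;> ring
    · have hα : 0 < α := by linarith
      rw [if_pos hα] at hxa
      rw [if_pos hβ] at hxb
      replace hua := hua hα.ne'
      replace hub := hub hβ.ne'
      have hs : 0 < α + β := by linarith
      replace hus := hus hs.ne'
      rw [if_pos hs] at hx
      have hd := hh.neg _ (W.sub_mem hua hub) x
      rw [neg_sub] at hd
      by_cases hd' : x ∈ h ((t - α⁻¹ • a) - (t - β⁻¹ • b))
      · refine Fmono _ hub _ hus x hxb ?_ hx
        convert hle _ (W.sub_mem hub hua) (α / (α + β)) (by positivity) x (hd hd') using 3
        match_scalars <;> field_simp <;> ring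
      · refine Fmono _ hua _ hus x hxa ?_ hx
        convert hle _ (W.sub_mem hua hub) (β / (α + β)) (by positivity) x hd' using 3
        match_scalars <;> field_simp <;> ring
  · unfold _root_.insertAtCut
    rcases lt_trichotomy (q a) 0 with h1 | h1 | h1
    · have h2 : r * q a < 0 := mul_neg_of_pos_of_neg hr h1
      simp only [map_smul, smul_eq_mul, h1, h1.not_gt, h2, h2.not_gt, if_true, if_false, smul_smul]
      congr 3
      field_simp
    · simp [h1, hh.smul a (hu0 a ha h1) r hr]
    · have h2 : 0 < r * q a := mul_pos hr h1
      simp only [map_smul, smul_eq_mul, h1, h2, if_true, smul_smul]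
      congr 3
      field_simp

/-- Over a well-ordered set of generators with countable initial segments, there is an order family
on the free vector space whose values at the generators are prescribed. -/
lemma exists_orderFamily_single_eq (hK : IsCompletelyNormalFamily K) {ι : Type*} [LinearOrder ι]
    [WellFoundedLT ι] (hι : ∀ i : ι, (Set.Iio i).Countable) {c : ι → Set X} (hc : ∀ i, c i ∈ K) :
    ∃ h : (ι →₀ ℚ) → Set X, IsOrderFamilyOn K ⊤ h ∧ ∀ i, h (Finsupp.single i 1) = c i := by
  let P := {p : Set ι × ((ι →₀ ℚ) → Set X) // IsLowerSet p.1 ∧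
    IsOrderFamilyOn K (Finsupp.supported ℚ ℚ p.1) p.2 ∧ ∀ i ∈ p.1, p.2 (Finsupp.single i 1) = c i}
  let r : P → P → Prop := fun p p' => p.1.1 ⊆ p'.1.1 ∧
    ∀ a ∈ Finsupp.supported ℚ ℚ p.1.1, p.1.2 a = p'.1.2 a
  have : Nonempty P := ⟨⟨(∅, fun _ => ∅), isLowerSet_empty,
    ⟨fun _ _ => hK.empty, by simp, by simp, by simp, by simp⟩, by simp⟩⟩
  have hchain : ∀ s : Set P, IsChain r s → s.Nonempty → ∃ ub, ∀ p ∈ s, r p ub := by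
    intro s hs hne
    let I : Set ι := ⋃ p ∈ s, p.1.1
    let H : (ι →₀ ℚ) → Set X := fun a =>
      {x | ∃ p ∈ s, a ∈ Finsupp.supported ℚ ℚ p.1.1 ∧ x ∈ p.1.2 a}
    have hH : ∀ p ∈ s, ∀ a ∈ Finsupp.supported ℚ ℚ p.1.1, p.1.2 a = H a := by
      intro p hp a ha
      ext x
      refine ⟨fun hx => ⟨p, hp, ha, hx⟩, ?_⟩
      rintro ⟨p', hp', ha', hx⟩
      rcases eq_or_ne p p' with rfl | hpp
      · exact hx
      rcases hs hp hp' hpp with h1 | h1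
      · rwa [h1.2 a ha]
      · rwa [← h1.2 a ha']
    have hdir : DirectedOn (fun p p' : P => p.1.1 ⊆ p'.1.1) s := by
      intro p hp p' hp'
      rcases eq_or_ne p p' with rfl | hpp
      · exact ⟨p, hp, subset_rfl, subset_rfl⟩
      rcases hs hp hp' hpp with h1 | h1
      · exact ⟨p', hp', h1.1, subset_rfl⟩
      · exact ⟨p, hp, subset_rfl, h1.1⟩
    have hI₂ : ∀ a ∈ Finsupp.supported ℚ ℚ I, ∀ b ∈ Finsupp.supported ℚ ℚ I, ∃ p ∈ s,
        a ∈ Finsupp.supported ℚ ℚ p.1.1 ∧ b ∈ Finsupp.supported ℚ ℚ p.1.1 := by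
      classical
      intro a ha b hb
      rw [Finsupp.mem_supported] at ha hb
      obtain ⟨p, hp, hsub⟩ := hdir.exists_mem_subset_of_finset_subset_biUnion hne
        (s := a.support ∪ b.support) (by rw [Finset.coe_union]; exact Set.union_subset ha hb)
      rw [Finset.coe_union, Set.union_subset_iff] at hsub
      exact ⟨p, hp, (Finsupp.mem_supported _ _).2 hsub.1, (Finsupp.mem_supported _ _).2 hsub.2⟩
    have hI : ∀ a ∈ Finsupp.supported ℚ ℚ I, ∃ p ∈ s, a ∈ Finsupp.supported ℚ ℚ p.1.1 :=
      fun a ha => (hI₂ a ha a ha).imp fun p hp => ⟨hp.1, hp.2.1⟩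
    refine ⟨⟨(I, H), ?_, ⟨?_, ?_, ?_, ?_, ?_⟩, ?_⟩, fun p hp =>
      ⟨Set.subset_biUnion_of_mem (u := fun p : P => p.1.1) hp, fun a ha => hH p hp a ha⟩⟩
    · exact isLowerSet_iUnion₂ fun p _ => p.2.1
    · intro a ha
      dsimp only
      obtain ⟨p, hp, hap⟩ := hI a ha
      rw [← hH p hp a hap]
      exact p.2.2.1.mem a hap
    · rintro x ⟨p, -, -, hx⟩
      exact p.2.2.1.zero x hx
    · intro a ha x
      dsimp only
      obtain ⟨p, hp, hap⟩ := hI a ha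
      rw [← hH p hp a hap, ← hH p hp _ (neg_mem hap)]
      exact p.2.2.1.neg a hap x
    · intro a ha b hb x
      dsimp only
      obtain ⟨p, hp, hap, hbp⟩ := hI₂ a ha b hb
      rw [← hH p hp a hap, ← hH p hp b hbp, ← hH p hp _ (add_mem hap hbp)]
      exact p.2.2.1.add a hap b hbp x
    · intro a ha q hq
      dsimp only
      obtain ⟨p, hp, hap⟩ := hI a ha
      rw [← hH p hp a hap, ← hH p hp _ (Submodule.smul_mem _ q hap)]
      exact p.2.2.1.smul a hap q hq
    · intro i hi
      obtain ⟨p, hp, hip⟩ := Set.mem_iUnion₂.1 hi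
      exact (hH p hp _ (Finsupp.single_mem_supported ℚ _ hip)).symm.trans (p.2.2.2 i hip)
  obtain ⟨⟨⟨I, h⟩, hlow, hfam, hval⟩, hmax⟩ := exists_maximal_of_nonempty_chains_bounded hchain
    fun {p₁ p₂ p₃} h₁ h₂ => ⟨h₁.1.trans h₂.1, fun a ha =>
      (h₁.2 a ha).trans (h₂.2 a (Finsupp.supported_mono h₁.1 ha))⟩
  dsimp only at hlow hfam hval
  suffices hI : I = Set.univ by
    subst hI
    rw [Finsupp.supported_univ] at hfam
    exact ⟨h, hfam, fun i => hval i (Set.mem_univ i)⟩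
  by_contra hne
  obtain ⟨i, hi, hmin⟩ := WellFounded.has_min (wellFounded_lt (α := ι)) Iᶜ
    (Set.nonempty_compl.2 hne)
  obtain rfl : I = Set.Iio i := by
    ext j
    refine ⟨fun hj => ?_, fun hj => ?_⟩
    · by_contra hij
      exact hi (hlow (not_lt.1 hij) hj)
    · by_contra hjI
      exact hmin j hjI hj
  have : Countable (Set.Iio i) := (hι i).to_subtype
  have : Countable (Finsupp.supported ℚ ℚ (Set.Iio i)) :=
    (Finsupp.supportedEquivFinsupp (M := ℚ) (R := ℚ) (Set.Iio i)).toEquiv.countable_iff.2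
      inferInstance
  obtain ⟨F, G, hF, hFG⟩ := hfam.exists_cut hK (hc i)
  let t : ι →₀ ℚ := Finsupp.single i 1
  let q : (ι →₀ ℚ) →ₗ[ℚ] ℚ := Finsupp.lapply i
  have hq : ∀ a ∈ Finsupp.supported ℚ ℚ (Set.Iio i), q a = 0 := by
    intro a ha
    exact Finsupp.notMem_support_iff.1 fun h' => lt_irrefl i ((Finsupp.mem_supported _ _).1 ha h')
  have heq : ∀ a ∈ Finsupp.supported ℚ ℚ (Set.Iio i), insertAtCut h F G q t a = h a := by
    intro a ha
    simp [insertAtCut, hq a ha]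
  have hnew : IsOrderFamilyOn K (Finsupp.supported ℚ ℚ (Set.Iic i)) (insertAtCut h F G q t) := by
    refine hfam.insertAtCut hFG fun a ha => ?_
    rw [Finsupp.mem_supported'] at ha ⊢
    intro j hj
    rcases eq_or_ne i j with rfl | hij
    · simp [q, t]
    · have := ha j fun hj' => hj (lt_of_le_of_ne hj' hij.symm)
      simp [q, t, this, hij]
  have hnewval : ∀ j ∈ Set.Iic i, insertAtCut h F G q t (Finsupp.single j 1) = c j := by
    intro j hj
    rcases eq_or_lt_of_le hj with rfl | hj
    · simpa [insertAtCut, q, t] using hF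
    · rw [heq _ (Finsupp.single_mem_supported ℚ _ hj)]
      exact hval j hj
  exact hi ((hmax ⟨(Set.Iic i, insertAtCut h F G q t), isLowerSet_Iic i, hnew, hnewval⟩
    ⟨Set.Iio_subset_Iic_self, fun a ha => (heq a ha).symm⟩).1 (Set.mem_Iic.2 le_rfl))

end Extension

section TotalCone

variable {V : Type*} [AddCommGroup V]

/-- The subgroup of elements equivalent to `0` in the preorder with positive cone `C`. -/
def AddSubmonoid.coneSupport (C : AddSubmonoid V) : AddSubgroup V where
  carrier := {a | a ∈ C ∧ -a ∈ C}
  zero_mem' := ⟨C.zero_mem, by simp⟩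
  add_mem' ha hb := ⟨C.add_mem ha.1 hb.1, by rw [neg_add]; exact C.add_mem ha.2 hb.2⟩
  neg_mem' ha := ⟨ha.2, by rw [neg_neg]; exact ha.1⟩

/-- The image of a cone in the quotient by its support. -/
def AddSubmonoid.quotientCone (C : AddSubmonoid V) : AddGroupCone (V ⧸ C.coneSupport) where
  toAddSubmonoid := C.map (QuotientAddGroup.mk' C.coneSupport)
  eq_zero_of_mem_of_neg_mem' := by
    rintro _ ⟨a, ha, rfl⟩ ⟨b, hb, hab⟩
    have hab' : a + b ∈ C.coneSupport := by
      rw [← QuotientAddGroup.eq_zero_iff]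
      have : (b : V ⧸ C.coneSupport) = -(a : V ⧸ C.coneSupport) := hab
      rw [QuotientAddGroup.mk_add, this, add_neg_cancel]
    refine (QuotientAddGroup.eq_zero_iff a).2 ⟨ha, ?_⟩
    have := C.add_mem hab'.2 hb
    rwa [neg_add, neg_add_cancel_right] at this

lemma AddSubmonoid.mk_mem_quotientCone {C : AddSubmonoid V} {a : V} :
    (a : V ⧸ C.coneSupport) ∈ C.quotientCone ↔ a ∈ C := by
  refine ⟨?_, fun ha => ⟨a, ha, rfl⟩⟩
  rintro ⟨b, hb, hab⟩
  have h : -b + a ∈ C.coneSupport := QuotientAddGroup.eq.1 hab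
  simpa using C.add_mem hb h.1

/-- A total cone on a group is induced by a homomorphism to a linearly ordered group. -/
lemma AddSubmonoid.exists_linearOrder {V : Type u} [AddCommGroup V] (C : AddSubmonoid V)
    (hC : ∀ a, a ∈ C ∨ -a ∈ C) :
    ∃ (T : Type u) (_ : AddCommGroup T) (_ : LinearOrder T) (_ : IsOrderedAddMonoid T)
      (φ : V →+ T), ∀ a, 0 ≤ φ a ↔ a ∈ C := by
  classical
  have : HasMemOrNegMem C.quotientCone := ⟨by
    intro a
    induction a using QuotientAddGroup.induction_on with
    | H a =>
      rw [← QuotientAddGroup.mk_neg, C.mk_mem_quotientCone, C.mk_mem_quotientCone]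
      exact hC a⟩
  let : LinearOrder (V ⧸ C.coneSupport) := LinearOrder.mkOfAddGroupCone C.quotientCone
  refine ⟨V ⧸ C.coneSupport, inferInstance, this, IsOrderedAddMonoid.mkOfCone C.quotientCone,
    QuotientAddGroup.mk' C.coneSupport, fun a => ?_⟩
  change (a : V ⧸ C.coneSupport) - 0 ∈ C.quotientCone ↔ _
  rw [sub_zero, C.mk_mem_quotientCone]

end TotalCone

section LatticeClosure

variable {L V : Type*} [Lattice L] [AddCommGroup L] [IsOrderedAddMonoid L] [AddCommGroup V]

/-- The `ℓ`-subgroup generated by the range of a homomorphism into an `ℓ`-group: it is the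
sublattice generated by this range. -/
def AddMonoidHom.latticeRange (φ : V →+ L) : AddSubgroup L where
  carrier := latticeClosure (Set.range φ)
  zero_mem' := subset_latticeClosure ⟨0, map_zero φ⟩
  add_mem' {a b} ha hb := by
    induction ha using latticeClosure_sup_inf_induction with
    | mem a ha =>
      obtain ⟨a, rfl⟩ := ha
      induction hb using latticeClosure_sup_inf_induction with
      | mem b hb =>
        obtain ⟨b, rfl⟩ := hb
        exact subset_latticeClosure ⟨a + b, map_add φ a b⟩
      | sup b₁ _ b₂ _ h₁ h₂ =>
        rw [add_sup]
        exact isSublattice_latticeClosure.supClosed h₁ h₂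
      | inf b₁ _ b₂ _ h₁ h₂ =>
        rw [add_inf]
        exact isSublattice_latticeClosure.infClosed h₁ h₂
    | sup a₁ _ a₂ _ h₁ h₂ =>
      rw [sup_add]
      exact isSublattice_latticeClosure.supClosed h₁ h₂
    | inf a₁ _ a₂ _ h₁ h₂ =>
      rw [inf_add]
      exact isSublattice_latticeClosure.infClosed h₁ h₂
  neg_mem' {a} ha := by
    change -a ∈ latticeClosure (Set.range φ)
    induction ha using latticeClosure_sup_inf_induction with
    | mem a ha =>
      obtain ⟨a, rfl⟩ := ha
      exact subset_latticeClosure ⟨-a, map_neg φ a⟩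
    | sup a₁ _ a₂ _ h₁ h₂ =>
      rw [neg_sup]
      exact isSublattice_latticeClosure.infClosed h₁ h₂
    | inf a₁ _ a₂ _ h₁ h₂ =>
      rw [neg_inf]
      exact isSublattice_latticeClosure.supClosed h₁ h₂

instance (φ : V →+ L) : Lattice φ.latticeRange :=
  Subtype.lattice (fun _ _ h₁ h₂ => isSublattice_latticeClosure.supClosed h₁ h₂)
    fun _ _ h₁ h₂ => isSublattice_latticeClosure.infClosed h₁ h₂

end LatticeClosure

section LSpectrum

variable {G : Type*} [Lattice G] [AddCommGroup G]

lemma LSpectrum.isOpen_notMem (a : G) : IsOpen {P : LSpectrum G | a ∉ P.1} :=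
  TopologicalSpace.isOpen_generateFrom_of_mem ⟨a, rfl⟩

/-- The basic open sets of the `ℓ`-spectrum are compact. -/
lemma LSpectrum.isCompact_notMem (a : G) : IsCompact {P : LSpectrum G | a ∉ P.1} := by
  rw [isCompact_iff_ultrafilter_le_nhds']
  intro f hf
  have hnot : ∀ g : G, (¬ ∀ᶠ P : LSpectrum G in f, g ∈ P.1) → ∀ᶠ P : LSpectrum G in f, g ∉ P.1 :=
    fun g hg => Ultrafilter.eventually_not.2 hg
  have ha : ¬ ∀ᶠ P : LSpectrum G in f, a ∈ P.1 := Ultrafilter.eventually_not.1 hf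
  refine ⟨⟨{g | ∀ᶠ P : LSpectrum G in f, g ∈ P.1}, ⟨?_, ?_, ?_, ?_⟩, ?_, ?_⟩, ha, ?_⟩
  · exact Filter.Eventually.of_forall fun P => P.2.1.1
  · intro x y hx hy
    filter_upwards [hx, hy] with P h₁ h₂ using P.2.1.2.1 x y h₁ h₂
  · intro x hx
    filter_upwards [hx] with P h₁ using P.2.1.2.2.1 x h₁
  · intro x y hy hxy
    filter_upwards [hy] with P h₁ using P.2.1.2.2.2 x y h₁ hxy
  · exact fun h => ha (h.symm ▸ Set.mem_univ a : a ∈ {g | ∀ᶠ P : LSpectrum G in f, g ∈ P.1})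
  · intro x y hxy
    refine Ultrafilter.eventually_or.1 ?_
    filter_upwards [hxy] with P h₁ using P.2.2.2 x y h₁
  · refine le_trans (le_iInf₂ fun U hU => ?_) TopologicalSpace.nhds_generateFrom.ge
    obtain ⟨hPU, b, rfl⟩ := hU
    exact Filter.le_principal_iff.2 (hnot b hPU)

lemma IsLIdeal.abs_mem_iff {P : Set G} [IsOrderedAddMonoid G] (hP : IsLIdeal P) {a : G} :
    |a| ∈ P ↔ a ∈ P := by
  have h : |a| ⊔ -|a| = a ⊔ -a := abs_abs a
  exact ⟨fun ha => hP.2.2.2 a |a| ha h.ge, fun ha => hP.2.2.2 |a| a ha h.le⟩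

lemma IsPrimeLIdeal.inf_abs_mem_iff {P : Set G} [IsOrderedAddMonoid G] (hP : IsPrimeLIdeal P)
    {a b : G} : |a| ⊓ |b| ∈ P ↔ a ∈ P ∨ b ∈ P := by
  have habs : |(|a| ⊓ |b|)| = |a| ⊓ |b| := abs_of_nonneg (le_inf (abs_nonneg a) (abs_nonneg b))
  refine ⟨fun h => ?_, ?_⟩
  · rw [← hP.1.abs_mem_iff, ← hP.1.abs_mem_iff (a := b)]
    exact hP.2.2 _ _ h
  · rintro (h | h)
    · exact hP.1.2.2.2 _ a h (habs.le.trans inf_le_left)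
    · exact hP.1.2.2.2 _ b h (habs.le.trans inf_le_right)

/-- The sets `{P | a ∉ P}` form a basis of the hull-kernel topology. -/
lemma LSpectrum.isTopologicalBasis [IsOrderedAddMonoid G] :
    TopologicalSpace.IsTopologicalBasis
      (Set.range fun a : G => {P : LSpectrum G | a ∉ P.1}) where
  exists_subset_inter := by
    rintro _ ⟨a, rfl⟩ _ ⟨b, rfl⟩ P hP
    have hiff : ∀ Q : LSpectrum G, |a| ⊓ |b| ∉ Q.1 ↔ a ∉ Q.1 ∧ b ∉ Q.1 := fun Q => by
      rw [Q.2.inf_abs_mem_iff, not_or]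
    exact ⟨_, ⟨|a| ⊓ |b|, rfl⟩, (hiff P).2 hP, fun Q hQ => (hiff Q).1 hQ⟩
  sUnion_eq := by
    refine Set.eq_univ_of_forall fun P => ?_
    obtain ⟨a, ha⟩ := (Set.ne_univ_iff_exists_notMem _).1 P.2.2.1
    exact ⟨_, ⟨a, rfl⟩, ha⟩
  eq_generateFrom := by
    change TopologicalSpace.generateFrom _ = _
    congr 1
    ext U
    exact exists_congr fun a => eq_comm

end LSpectrum

section Embedding

variable {X : Type*} {V : Type*} [AddCommGroup V] {T : X → Type*} [∀ x, AddCommGroup (T x)]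
  [∀ x, LinearOrder (T x)] [∀ x, IsOrderedAddMonoid (T x)] {φ : V →+ ∀ x, T x}

/-- The prime `ℓ`-ideal of elements vanishing at a coordinate `x`. -/
def coordinateIdeal (hφ : ∀ x, ∃ a, φ a x ≠ 0) (x : X) : LSpectrum φ.latticeRange :=
  ⟨{g | g.1 x = 0}, ⟨rfl,
    fun g k (hg : g.1 x = 0) (hk : k.1 x = 0) => show g.1 x + k.1 x = 0 by rw [hg, hk, add_zero],
    fun g (hg : g.1 x = 0) => show -g.1 x = 0 by rw [hg, neg_zero],
    fun g k (hk : k.1 x = 0) hgk => by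
      have h : |g.1 x| ≤ |k.1 x| := hgk x
      rw [hk, abs_zero] at h
      exact abs_nonpos_iff.1 h⟩,
    fun h => by
      obtain ⟨a, ha⟩ := hφ x
      exact ha (h.symm ▸ Set.mem_univ _ :
        (⟨φ a, subset_latticeClosure ⟨a, rfl⟩⟩ : φ.latticeRange) ∈ {g | g.1 x = 0}),
    fun g k (hgk : min (g.1 x) (k.1 x) = 0) => by
      rcases min_choice (g.1 x) (k.1 x) with h | h
      · exact Or.inl (h.symm.trans hgk)
      · exact Or.inr (h.symm.trans hgk)⟩

lemma IsCompletelyNormalFamily.ne_zero_mem {K : Set (Set X)} (hK : IsCompletelyNormalFamily K)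
    (hφ : ∀ a, {x | 0 < φ a x} ∈ K) (g : φ.latticeRange) : {x | g.1 x ≠ 0} ∈ K := by
  have hpos : ∀ g ∈ latticeClosure (Set.range φ), {x | 0 < g x} ∈ K := by
    intro g hg
    induction hg using latticeClosure_sup_inf_induction with
    | mem a ha =>
      obtain ⟨a, rfl⟩ := ha
      exact hφ a
    | sup a _ b _ h₁ h₂ =>
      convert hK.union _ h₁ _ h₂ using 1
      ext x
      exact lt_sup_iff
    | inf a _ b _ h₁ h₂ =>
      convert hK.inter _ h₁ _ h₂ using 1
      ext x
      exact lt_inf_iff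
  convert hK.union _ (hpos _ g.2) _ (hpos _ (-g).2) using 1
  ext x
  change g.1 x ≠ 0 ↔ 0 < g.1 x ∨ 0 < -g.1 x
  rw [Left.neg_pos_iff, or_comm]
  exact ne_iff_lt_or_gt

end Embedding

/-- every completely normal generalized spectral space with at most `ℵ₁`
compact open sets embeds, as a spectral subspace, into the `ℓ`-spectrum of some Abelian
`ℓ`-group.  "Generalized spectral" is: sober (`T0` + quasi-sober) with the compact open
sets forming a basis closed under finite intersections; "completely normal" refers to the
lattice of compact open sets; "spectral subspace" means a topological embedding such that
the preimage map is a surjection from the compact open sets of the `ℓ`-spectrum onto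
those of `X`. -/
theorem stmt2 (X : Type u) [TopologicalSpace X] [T0Space X] [QuasiSober X]
    (hbasis : TopologicalSpace.IsTopologicalBasis {U : Set X | IsCompact U ∧ IsOpen U})
    (hinter : ∀ U V : Set X, IsCompact U → IsOpen U → IsCompact V → IsOpen V →
      IsCompact (U ∩ V))
    (hcn : ∀ U V : Set X, IsCompact U → IsOpen U → IsCompact V → IsOpen V →
      ∃ W Z : Set X, (IsCompact W ∧ IsOpen W) ∧ (IsCompact Z ∧ IsOpen Z) ∧
        U ∪ V = U ∪ Z ∧ U ∪ V = W ∪ V ∧ W ∩ Z = ∅)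
    (hcard : Cardinal.mk {U : Set X // IsCompact U ∧ IsOpen U} ≤ Cardinal.aleph 1) :
    ∃ (G : AbelianLGroup.{u}) (e : X → LSpectrum G.carrier),
      Topology.IsEmbedding e ∧
      (∀ U : Set (LSpectrum G.carrier), IsCompact U → IsOpen U →
        IsCompact (e ⁻¹' U) ∧ IsOpen (e ⁻¹' U)) ∧
      (∀ V : Set X, IsCompact V → IsOpen V →
        ∃ U : Set (LSpectrum G.carrier), IsCompact U ∧ IsOpen U ∧ e ⁻¹' U = V) := by
  let K : Set (Set X) := {U | IsCompact U ∧ IsOpen U}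
  have hK : IsCompletelyNormalFamily K :=
    { empty := ⟨isCompact_empty, isOpen_empty⟩
      inter := fun U hU W hW => ⟨hinter U W hU.1 hU.2 hW.1 hW.2, hU.2.inter hW.2⟩
      union := fun U hU W hW => ⟨hU.1.union hW.1, hU.2.union hW.2⟩
      split := fun U hU W hW => by
        obtain ⟨A, B, hA, hB, h⟩ := hcn U W hU.1 hU.2 hW.1 hW.2
        exact ⟨A, hA, B, hB, h⟩ }
  let ι : Type u := (Cardinal.aleph.{u} 1).ord.ToType
  have hι : ∀ i : ι, (Set.Iio i).Countable := by
    intro i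
    have h : Cardinal.mk (Set.Iio i) < Cardinal.aleph 1 := by
      simpa [ι] using Cardinal.mk_Iio_lt i (by simp [ι])
    rw [← Cardinal.le_aleph0_iff_set_countable, ← Order.lt_succ_iff, Cardinal.succ_aleph0]
    exact h
  obtain ⟨c, hc⟩ : ∃ c : ι → K, Function.Surjective c := by
    have hmk : Cardinal.mk ι = Cardinal.aleph 1 := by simp [ι]
    have hle : Cardinal.mk K ≤ Cardinal.mk ι := hcard.trans_eq hmk.symm
    obtain ⟨f⟩ := hle
    have : Nonempty K := ⟨⟨∅, hK.empty⟩⟩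
    exact ⟨Function.invFun f, Function.invFun_surjective f.injective⟩
  obtain ⟨h, hh, hval⟩ := exists_orderFamily_single_eq hK hι (c := fun i => (c i).1)
    fun i => (c i).2
  let C : X → AddSubmonoid (ι →₀ ℚ) := fun x =>
    { carrier := {a | x ∉ h (-a)}
      zero_mem' := by simpa using hh.zero x
      add_mem' := fun {a b} ha hb hab =>
        (hh.add (-a) trivial (-b) trivial x (by rwa [← neg_add])).elim ha hb }
  have hC : ∀ x a, a ∈ C x ∨ -a ∈ C x := by
    intro x a
    by_cases ha : x ∈ h (-a)
    · exact Or.inr (hh.neg (-a) trivial x ha)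
    · exact Or.inl ha
  choose T hT₁ hT₂ hT₃ ψ hψ using fun x => (C x).exists_linearOrder (hC x)
  let φ : (ι →₀ ℚ) →+ ∀ x, T x := AddMonoidHom.mk' (fun a x => ψ x a) fun a b => by
    funext x
    exact map_add (ψ x) a b
  have hφ : ∀ a, {x | 0 < φ a x} = h a := by
    intro a
    ext x
    change 0 < ψ x a ↔ _
    have h₁ : 0 ≤ ψ x (-a) ↔ x ∉ h (- -a) := hψ x (-a)
    rw [neg_neg, map_neg, Left.nonneg_neg_iff] at h₁
    rw [← not_le, h₁, not_not]
  have hφK : ∀ a, {x | 0 < φ a x} ∈ K := fun a => by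
    rw [hφ]
    exact hh.mem a trivial
  have hsurj : ∀ U ∈ K, ∃ a, {x | 0 < φ a x} = U := by
    intro U hU
    obtain ⟨i, hi⟩ := hc ⟨U, hU⟩
    exact ⟨Finsupp.single i 1, by rw [hφ, hval, hi]⟩
  have hne : ∀ x, ∃ a, φ a x ≠ 0 := by
    intro x
    obtain ⟨U, hU, hxU, -⟩ := hbasis.exists_subset_of_mem_open (Set.mem_univ x) isOpen_univ
    obtain ⟨a, rfl⟩ := hsurj U hU
    exact ⟨a, ne_of_gt hxU⟩
  have hpre : ∀ U ∈ K, ∃ g : φ.latticeRange,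
      coordinateIdeal hne ⁻¹' {P | g ∉ P.1} = U := by
    intro U hU
    obtain ⟨a, rfl⟩ := hsurj U hU
    refine ⟨⟨φ a, subset_latticeClosure ⟨a, rfl⟩⟩ ⊔ 0, ?_⟩
    ext x
    change max (φ a x) 0 ≠ 0 ↔ 0 < φ a x
    rw [Ne, max_eq_right_iff, not_le]
  have hbasic : ∀ g : φ.latticeRange, coordinateIdeal hne ⁻¹' {P | g ∉ P.1} ∈ K :=
    hK.ne_zero_mem hφK
  have hind : Topology.IsInducing (coordinateIdeal hne) := by
    refine ⟨le_antisymm ?_ ?_⟩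
    · rw [← continuous_iff_le_induced]
      refine continuous_generateFrom_iff.2 ?_
      rintro _ ⟨g, rfl⟩
      exact (hbasic g).2
    · rw [hbasis.eq_generateFrom]
      refine le_generateFrom fun U hU => ?_
      obtain ⟨g, hg⟩ := hpre U hU
      exact ⟨_, LSpectrum.isOpen_notMem g, hg⟩
  refine ⟨⟨φ.latticeRange, fun a b hab c => add_le_add_right (α := ∀ x, T x) hab c⟩,
    coordinateIdeal hne, hind.isEmbedding, fun U hUc hUo => ?_, fun U hUc hUo => ?_⟩
  · have : IsOrderedAddMonoid φ.latticeRange :=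
      { add_le_add_left := fun a b hab c => add_le_add_left (α := ∀ x, T x) hab c }
    obtain ⟨s, hs, rfl⟩ := eq_finite_iUnion_of_isTopologicalBasis_of_isCompact_open _
      LSpectrum.isTopologicalBasis U hUc hUo
    refine ⟨?_, hUo.preimage hind.continuous⟩
    rw [Set.preimage_iUnion₂]
    exact hs.isCompact_biUnion fun g _ => (hbasic g).1
  · obtain ⟨g, hg⟩ := hpre U ⟨hUc, hUo⟩
    exact ⟨_, LSpectrum.isCompact_notMem g, LSpectrum.isOpen_notMem g, hg⟩
end

section
/- Let k be a totally ordered division ring, let I and J be sets, let L be a completely normal distributive 0-lattice, let D be a finite subset of k^(J), and let e ∈ k^(J). Then every top-faithful 0-lattice homomorphism f : Op(k^(I) ∪ D, k^(J)) → L ∪ {∞} extends to a top-faithful lattice homomorphism g : Op(k^(I) ∪ D ∪ {e}, k^(J)) → L ∪ {∞}. -/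
/-- The linear functional `x ↦ Σ_i a_i * x_i` on `k^(ι)` associated with `a ∈ k^(ι)`. -/
def pairing {k ι : Type*} [DivisionRing k] (a x : ι →₀ k) : k :=
  a.sum fun i c => c * x i

/-- The vectors of `k^(ι)` supported on a subset `I ⊆ ι` (the copy of `k^(I)`
inside `k^(ι)`). -/
def suppIn {k ι : Type*} [Zero k] (I : Set ι) : Set (ι →₀ k) :=
  {y : ι →₀ k | ∀ i, i ∉ I → y i = 0}

/-- Membership in `Op⁻(A, k^(ι))`: the sublattice of the powerset of `k^(ι)` generated
by the sets `⟦a > 0⟧` and `⟦a < 0⟧` for `a ∈ A`. -/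
inductive MemOp {k ι : Type*} [DivisionRing k] [LinearOrder k]
    (A : Set (ι →₀ k)) : Set (ι →₀ k) → Prop
  | pos (a : ι →₀ k) (ha : a ∈ A) : MemOp A {x : ι →₀ k | 0 < pairing a x}
  | neg (a : ι →₀ k) (ha : a ∈ A) : MemOp A {x : ι →₀ k | pairing a x < 0}
  | union {U V : Set (ι →₀ k)} : MemOp A U → MemOp A V → MemOp A (U ∪ V)
  | inter {U V : Set (ι →₀ k)} : MemOp A U → MemOp A V → MemOp A (U ∩ V)

/-- Membership in `Op(A, k^(ι)) = Op⁻(A, k^(ι)) ∪ {k^(ι)}`, a bounded lattice with top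
element the full space. -/
def MemOpTop {k ι : Type*} [DivisionRing k] [LinearOrder k]
    (A : Set (ι →₀ k)) (U : Set (ι →₀ k)) : Prop :=
  MemOp A U ∨ U = Set.univ

section Order

variable {k : Type*} [DivisionRing k] [LinearOrder k]

theorem isStrictOrderedRing_of_covariantClass [CovariantClass k k (· + ·) (· < ·)]
    [PosMulStrictMono k] [MulPosStrictMono k] : IsStrictOrderedRing k := by
  have hadd : ∀ a b : k, a ≤ b → ∀ c : k, c + a ≤ c + b := by
    intro a b h c
    rcases h.eq_or_lt with rfl | h
    · exact le_rfl
    · exact (CovariantClass.elim c h : c + a < c + b).le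
  have : IsOrderedAddMonoid k :=
    ⟨fun a b h c => by rw [add_comm a, add_comm b]; exact hadd a b h c, hadd⟩
  have : ZeroLEOneClass k := ⟨by
    by_contra h
    have h0 : (1 : k) < 0 := not_le.mp h
    have h1 : (0 : k) < -1 := neg_pos.mpr h0
    have h2 : (0 : k) < -1 * -1 := mul_pos h1 h1
    rw [neg_mul_neg, one_mul] at h2
    exact lt_asymm h2 h0⟩
  exact IsStrictOrderedRing.of_mul_pos fun a b => mul_pos

variable [IsStrictOrderedRing k]

theorem denselyOrdered_of_divisionRing : DenselyOrdered k := by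
  refine ⟨fun a b hab => ⟨(a + b) * 2⁻¹, ?_, ?_⟩⟩
  · rw [← div_eq_mul_inv, lt_div_iff₀ two_pos, mul_two]
    exact add_lt_add_right hab a
  · rw [← div_eq_mul_inv, div_lt_iff₀ two_pos, mul_two]
    exact add_lt_add_left hab b

/-- Two finite families of points of `k` in the same relative order: a position relative to
one of them can be reproduced relative to the other. -/
theorem exists_sign_add_eq {α : Type*} {S : Set α} (hS : S.Finite) (p q : α → k)
    (h : ∀ a ∈ S, ∀ b ∈ S, SignType.sign (p a - p b) = SignType.sign (q a - q b)) :
    ∃ s : k, ∀ a ∈ S, SignType.sign (p a + s) = SignType.sign (q a) := by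
  classical
  have : DenselyOrdered k := denselyOrdered_of_divisionRing
  by_cases hz : ∃ a ∈ S, q a = 0
  · obtain ⟨a, ha, hqa⟩ := hz
    refine ⟨-p a, fun b hb => ?_⟩
    rw [← sub_eq_add_neg, h b hb a ha, hqa, sub_zero]
  · push Not at hz
    obtain ⟨m, hlo, hhi⟩ := Order.exists_between_finsets
      ((hS.toFinset.filter fun a => q a < 0).image p)
      ((hS.toFinset.filter fun a => 0 < q a).image p) (by
        simp only [Finset.mem_image, Finset.mem_filter, Set.Finite.mem_toFinset]
        rintro _ ⟨a, ⟨ha, hqa⟩, rfl⟩ _ ⟨b, ⟨hb, hqb⟩, rfl⟩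
        have := h a ha b hb
        rw [sign_neg (sub_neg.mpr (hqa.trans hqb)), sign_eq_neg_one_iff, sub_neg] at this
        exact this)
    simp only [Finset.mem_image, Finset.mem_filter, Set.Finite.mem_toFinset,
      forall_exists_index, and_imp] at hlo hhi
    refine ⟨-m, fun a ha => ?_⟩
    rw [← sub_eq_add_neg]
    rcases lt_trichotomy (q a) 0 with hq | hq | hq
    · rw [sign_neg hq, sign_neg (sub_neg.mpr (hlo _ a ha hq rfl))]
    · exact absurd hq (hz a ha)
    · rw [sign_pos hq, sign_pos (sub_pos.mpr (hhi _ a ha hq rfl))]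

end Order

section Pairing

variable {k ι : Type*} [DivisionRing k]

theorem pairing_add_right (a x y : ι →₀ k) : pairing a (x + y) = pairing a x + pairing a y := by
  simp [pairing, mul_add, Finsupp.sum_add]

theorem pairing_op_smul (a x : ι →₀ k) (c : k) :
    pairing a (MulOpposite.op c • x) = pairing a x * c := by
  simp [pairing, Finsupp.sum, Finset.sum_mul, mul_assoc]

theorem pairing_zero_right (a : ι →₀ k) : pairing a 0 = 0 := by
  simp [pairing, Finsupp.sum]

theorem pairing_zero_left (x : ι →₀ k) : pairing 0 x = 0 := by
  simp [pairing]

theorem pairing_single_right (a : ι →₀ k) (i : ι) (c : k) :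
    pairing a (Finsupp.single i c) = a i * c := by
  classical
  simp only [pairing, Finsupp.single_apply, mul_ite, mul_zero]
  rw [Finsupp.sum_ite_eq]
  split_ifs with h
  · rfl
  · rw [Finsupp.notMem_support_iff.mp h, zero_mul]

theorem pairing_smul_left (c : k) (a x : ι →₀ k) : pairing (c • a) x = c * pairing a x := by
  rw [pairing, Finsupp.sum_smul_index (by simp)]
  simp [pairing, Finsupp.sum, Finset.mul_sum, mul_assoc]

theorem pairing_sub_left (a b x : ι →₀ k) : pairing (a - b) x = pairing a x - pairing b x :=
  Finsupp.sum_sub_index fun i c d => sub_mul c d (x i)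

theorem pairing_neg_left (a x : ι →₀ k) : pairing (-a) x = -pairing a x := by
  rw [← zero_sub, pairing_sub_left, pairing_zero_left, zero_sub]

theorem pairing_congr {I : Set ι} {a x y : ι →₀ k} (ha : a ∈ suppIn I)
    (hxy : ∀ i ∈ I, x i = y i) : pairing a x = pairing a y := by
  refine Finset.sum_congr rfl fun i hi => ?_
  by_cases hiI : i ∈ I
  · simp only [hxy i hiI]
  · exact absurd (ha i hiI) (Finsupp.mem_support_iff.mp hi)

end Pairing

section Elimination

variable {k ι : Type*} [DivisionRing k] [LinearOrder k]

/-- The points `x` and `y` are on the same side of every hyperplane `⟦a = 0⟧`, `a ∈ A`. -/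
def SameSigns (A : Set (ι →₀ k)) (x y : ι →₀ k) : Prop :=
  ∀ a ∈ A, SignType.sign (pairing a x) = SignType.sign (pairing a y)

theorem MemOp.mem_of_sameSigns {A U : Set (ι →₀ k)} (hU : MemOp A U) {x y : ι →₀ k}
    (hxy : SameSigns A x y) (hx : x ∈ U) : y ∈ U := by
  induction hU with
  | pos a ha =>
    rw [Set.mem_ofPred_eq, ← sign_eq_one_iff] at hx ⊢
    rw [← hxy a ha, hx]
  | neg a ha =>
    rw [Set.mem_ofPred_eq, ← sign_eq_neg_one_iff] at hx ⊢
    rw [← hxy a ha, hx]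
  | union _ _ ihU ihV => exact hx.imp ihU ihV
  | inter _ _ ihU ihV => exact hx.imp ihU ihV

theorem MemOpTop.mem_of_sameSigns {A U : Set (ι →₀ k)} (hU : MemOpTop A U) {x y : ι →₀ k}
    (hxy : SameSigns A x y) (hx : x ∈ U) : y ∈ U := by
  rcases hU with hU | rfl
  · exact hU.mem_of_sameSigns hxy hx
  · exact Set.mem_univ y

theorem MemOp.zero_notMem {A U : Set (ι →₀ k)} (hU : MemOp A U) : (0 : ι →₀ k) ∉ U := by
  induction hU with
  | pos a ha => simp [pairing_zero_right]
  | neg a ha => simp [pairing_zero_right]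
  | union _ _ ihU ihV => simp [ihU, ihV]
  | inter _ _ ihU ihV => simp [ihU]

variable [IsStrictOrderedRing k]

/-- Elimination of one variable: the sign conditions on `D` that can be met by changing the
`i`-th coordinate of `x` are controlled by the signs at `x` of finitely many functionals that do
not involve this coordinate. -/
theorem exists_sameSigns_eliminate_one (i : ι) {D : Set (ι →₀ k)} (hD : D.Finite) {W : Set ι}
    (hW : D ⊆ suppIn W) :
    ∃ C : Set (ι →₀ k), C.Finite ∧ C ⊆ suppIn (W \ {i}) ∧ ∀ x z, SameSigns C x z →
      ∃ s : k, SameSigns D (x + Finsupp.single i s) z := by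
  let D' : Set (ι →₀ k) := {d ∈ D | d i ≠ 0}
  have hD' : D'.Finite := hD.subset (Set.sep_subset _ _)
  refine ⟨{d ∈ D | d i = 0} ∪ Set.image2 (fun c d => (c i)⁻¹ • c - (d i)⁻¹ • d) D' D',
    (hD.subset (Set.sep_subset _ _)).union (hD'.image2 _ hD'), ?_, ?_⟩
  · rintro c (⟨hc, hci⟩ | ⟨c, ⟨hc, hci⟩, d, ⟨hd, hdi⟩, rfl⟩) j hj
    · by_cases hji : j = i
      · rw [hji, hci]
      · exact hW hc j fun h => hj ⟨h, hji⟩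
    · by_cases hji : j = i
      · simp [hji, hci, hdi]
      · have hjW : j ∉ W := fun h => hj ⟨h, hji⟩
        simp [hW hc j hjW, hW hd j hjW]
  · intro x z hxz
    obtain ⟨s, hs⟩ := exists_sign_add_eq hD' (fun d => (d i)⁻¹ * pairing d x)
      (fun d => (d i)⁻¹ * pairing d z) (by
        intro c hc d hd
        have := hxz _ (Or.inr ⟨c, hc, d, hd, rfl⟩)
        simpa only [pairing_sub_left, pairing_smul_left] using this)
    refine ⟨s, fun d hd => ?_⟩
    rw [pairing_add_right, pairing_single_right]
    by_cases hdi : d i = 0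
    · rw [hdi, zero_mul, add_zero, hxz d (Or.inl ⟨hd, hdi⟩)]
    · have h : pairing d x + d i * s = d i * ((d i)⁻¹ * pairing d x + s) := by
        rw [mul_add, mul_inv_cancel_left₀ hdi]
      rw [h, sign_mul, hs d ⟨hd, hdi⟩, ← sign_mul, mul_inv_cancel_left₀ hdi]

theorem exists_sameSigns_eliminate (T : Finset ι) {D : Set (ι →₀ k)} (hD : D.Finite) {W : Set ι}
    (hW : D ⊆ suppIn W) :
    ∃ C : Set (ι →₀ k), C.Finite ∧ C ⊆ suppIn (W \ T) ∧ ∀ x z, SameSigns C x z →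
      ∃ y, (∀ i ∉ T, y i = x i) ∧ SameSigns D y z := by
  classical
  induction T using Finset.induction_on generalizing D W with
  | empty => exact ⟨D, hD, by simpa using hW, fun x z h => ⟨x, fun _ _ => rfl, h⟩⟩
  | insert i T _ ih =>
    obtain ⟨C₁, hC₁, hC₁W, h₁⟩ := exists_sameSigns_eliminate_one i hD hW
    obtain ⟨C, hC, hCW, h⟩ := ih hC₁ hC₁W
    refine ⟨C, hC, ?_, fun x z hxz => ?_⟩
    · rwa [Finset.coe_insert, Set.insert_eq, ← Set.sdiff_sdiff]
    · obtain ⟨y, hy, hyz⟩ := h x z hxz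
      obtain ⟨s, hs⟩ := h₁ y z hyz
      refine ⟨_, fun j hj => ?_, hs⟩
      rw [Finset.mem_insert, not_or] at hj
      rw [Finsupp.add_apply, Finsupp.single_eq_of_ne hj.1, add_zero, hy j hj.2]

/-- Finitely many members of `k^(I) ∪ D` determine which signs `e` takes on the
`k^(I) ∪ D`-cell of a given point. -/
theorem exists_finite_sameSigns (I : Set ι) {D : Set (ι →₀ k)} (hD : D.Finite) (e : ι →₀ k) :
    ∃ F : Set (ι →₀ k), F.Finite ∧ F ⊆ suppIn I ∪ D ∧ ∀ x z, SameSigns F x z →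
      ∃ y, SameSigns (suppIn I ∪ D) x y ∧
        SignType.sign (pairing e y) = SignType.sign (pairing e z) := by
  classical
  have hDe : (insert e D).Finite := hD.insert e
  let W : Finset ι := hDe.toFinset.biUnion Finsupp.support
  have hW : insert e D ⊆ suppIn (W : Set ι) := by
    intro d hd i hi
    by_contra h
    exact hi (Finset.mem_coe.mpr (Finset.mem_biUnion.mpr
      ⟨d, hDe.mem_toFinset.mpr hd, Finsupp.mem_support_iff.mpr h⟩))
  obtain ⟨C, hC, hCI, h⟩ := exists_sameSigns_eliminate (W.filter (· ∉ I)) hDe hW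
  refine ⟨C ∪ D, hC.union hD, Set.union_subset_union_left D ?_, fun x z hxz => ?_⟩
  · intro c hc i hi
    refine hCI hc i fun hiW => hiW.2 ?_
    exact Finset.mem_coe.mpr (Finset.mem_filter.mpr ⟨hiW.1, hi⟩)
  · obtain ⟨y, hy, hyz⟩ := h x z fun c hc => hxz c (Or.inl hc)
    refine ⟨y, ?_, hyz e (Set.mem_insert e D)⟩
    rintro a (ha | ha)
    · rw [pairing_congr ha fun i hi => (hy i fun h => (Finset.mem_filter.mp h).2 hi).symm]
    · rw [hxz a (Or.inr ha), hyz a (Set.mem_insert_of_mem e ha)]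

end Elimination

section Approximation

variable {k ι : Type*} [DivisionRing k] [LinearOrder k]

theorem MemOpTop.union {A U V : Set (ι →₀ k)} (hU : MemOpTop A U) (hV : MemOpTop A V) :
    MemOpTop A (U ∪ V) := by
  rcases hU with hU | rfl
  · rcases hV with hV | rfl
    · exact Or.inl (hU.union hV)
    · exact Or.inr (Set.union_univ U)
  · exact Or.inr (Set.univ_union V)

theorem MemOpTop.inter {A U V : Set (ι →₀ k)} (hU : MemOpTop A U) (hV : MemOpTop A V) :
    MemOpTop A (U ∩ V) := by
  rcases hU with hU | rfl
  · rcases hV with hV | rfl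
    · exact Or.inl (hU.inter hV)
    · rw [Set.inter_univ]
      exact Or.inl hU
  · rwa [Set.univ_inter]

theorem MemOp.mono {A B U : Set (ι →₀ k)} (hAB : A ⊆ B) (hU : MemOp A U) : MemOp B U := by
  induction hU with
  | pos a ha => exact .pos a (hAB ha)
  | neg a ha => exact .neg a (hAB ha)
  | union _ _ ihU ihV => exact ihU.union ihV
  | inter _ _ ihU ihV => exact ihU.inter ihV

theorem MemOp.empty {A : Set (ι →₀ k)} (hA : 0 ∈ A) : MemOp A ∅ := by
  have h := MemOp.pos (0 : ι →₀ k) hA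
  simpa [pairing_zero_left] using h

theorem MemOp.sUnion {A : Set (ι →₀ k)} (hA : 0 ∈ A) {𝒰 : Set (Set (ι →₀ k))} (hfin : 𝒰.Finite)
    (h𝒰 : ∀ U ∈ 𝒰, MemOp A U) : MemOp A (⋃₀ 𝒰) := by
  induction 𝒰, hfin using Set.Finite.induction_on with
  | empty => simpa using MemOp.empty hA
  | insert _ _ ih =>
    rw [Set.sUnion_insert]
    exact (h𝒰 _ (Set.mem_insert _ _)).union (ih fun U hU => h𝒰 U (Set.mem_insert_of_mem _ hU))

/-- The union of the `F`-cells whose closure contains the `F`-cell of `y`. -/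
def openStar (F : Set (ι →₀ k)) (y : ι →₀ k) : Set (ι →₀ k) :=
  {x | ∀ a ∈ F, SignType.sign (pairing a y) ≠ 0 →
    SignType.sign (pairing a x) = SignType.sign (pairing a y)}

theorem finite_range_openStar {F : Set (ι →₀ k)} (hF : F.Finite) :
    (Set.range (openStar F)).Finite := by
  have : Finite F := hF
  let h : (F → SignType) → Set (ι →₀ k) := fun σ =>
    {x | ∀ a : F, σ a ≠ 0 → SignType.sign (pairing a.1 x) = σ a}
  refine (Set.finite_range h).subset ?_
  rintro _ ⟨y, rfl⟩
  refine ⟨fun a => SignType.sign (pairing a.1 y), ?_⟩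
  ext x
  exact ⟨fun hx a ha => hx ⟨a, ha⟩, fun hx a => hx a.1 a.2⟩

theorem memOpTop_openStar {A F : Set (ι →₀ k)} (hF : F.Finite) (hFA : F ⊆ A) (y : ι →₀ k) :
    MemOpTop A (openStar F y) := by
  induction F, hF using Set.Finite.induction_on with
  | empty => exact Or.inr (by simp [openStar])
  | @insert a F _ _ ih =>
    have hsplit : openStar (insert a F) y = openStar {a} y ∩ openStar F y := by
      ext x
      simp [openStar]
    rw [hsplit]
    refine MemOpTop.inter ?_ (ih fun b hb => hFA (Set.mem_insert_of_mem a hb))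
    have ha : a ∈ A := hFA (Set.mem_insert a F)
    rcases lt_trichotomy (pairing a y) 0 with h | h | h
    · refine Or.inl ?_
      convert MemOp.neg a ha using 1
      ext x
      simp [openStar, h, h.ne, sign_eq_neg_one_iff]
    · exact Or.inr (by simp [openStar, h])
    · refine Or.inl ?_
      convert MemOp.pos a ha using 1
      ext x
      simp [openStar, h, h.ne', sign_eq_one_iff]

/-- The least union of `F`-cells that is open for the `F`-cell structure and contains all
`F`-cells contained in `⟦e > 0⟧`. -/
def posApprox (F : Set (ι →₀ k)) (e : ι →₀ k) : Set (ι →₀ k) :=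
  ⋃₀ (openStar F '' {y | ∀ z, SameSigns F y z → 0 < pairing e z})

theorem memOp_posApprox {A F : Set (ι →₀ k)} (hA : 0 ∈ A) (hF : F.Finite) (hFA : F ⊆ A)
    (e : ι →₀ k) : MemOp A (posApprox F e) := by
  refine MemOp.sUnion hA ((finite_range_openStar hF).subset (Set.image_subset_range _ _)) ?_
  rintro _ ⟨y, hy, rfl⟩
  refine (memOpTop_openStar hF hFA y).resolve_right fun huniv => ?_
  have h0 : (0 : ι →₀ k) ∈ openStar F y := huniv ▸ Set.mem_univ _
  have hpos : 0 < pairing e 0 := hy 0 fun a ha => by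
    by_contra hne
    rw [pairing_zero_right, sign_zero] at hne
    exact hne ((h0 a ha hne).symm.trans (by rw [pairing_zero_right, sign_zero]))
  exact hpos.ne' (pairing_zero_right e)

theorem mem_posApprox {F : Set (ι →₀ k)} {e x : ι →₀ k}
    (h : ∀ z, SameSigns F x z → 0 < pairing e z) : x ∈ posApprox F e :=
  ⟨openStar F x, ⟨x, h, rfl⟩, fun _ _ _ => rfl⟩

variable [IsStrictOrderedRing k]

theorem sign_mul_add_eq {a b s : k} (hs : 0 < s)
    (h : SignType.sign a ≠ 0 → SignType.sign b = SignType.sign a) :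
    SignType.sign b = SignType.sign (a * s + b) := by
  rcases lt_trichotomy a 0 with ha | rfl | ha
  · have hb : b < 0 := by simpa [sign_neg ha, sign_eq_neg_one_iff] using h
    rw [sign_neg hb, sign_neg (add_neg (mul_neg_of_neg_of_pos ha hs) hb)]
  · rw [zero_mul, zero_add]
  · have hb : 0 < b := by simpa [sign_pos ha, sign_eq_one_iff] using h
    rw [sign_pos hb, sign_pos (add_pos (mul_pos ha hs) hb)]

theorem exists_sameSigns_of_mem_posApprox {F : Set (ι →₀ k)} {e x : ι →₀ k}
    (hx : x ∈ posApprox F e) : ∃ z, SameSigns F x z ∧ 0 < pairing e z := by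
  obtain ⟨_, ⟨y, hy, rfl⟩, hxy⟩ := hx
  have hey : 0 < pairing e y := hy y fun _ _ => rfl
  refine ⟨MulOpposite.op ((pairing e y)⁻¹ * (|pairing e x| + 1)) • y + x, fun a ha => ?_, ?_⟩
  · rw [pairing_add_right, pairing_op_smul]
    refine sign_mul_add_eq (mul_pos (inv_pos.mpr hey) ?_) (hxy a ha)
    exact add_pos_of_nonneg_of_pos (abs_nonneg _) one_pos
  · rw [pairing_add_right, pairing_op_smul, mul_inv_cancel_left₀ hey.ne']
    rw [add_right_comm]
    exact add_pos_of_nonneg_of_pos (neg_le_iff_add_nonneg.mp (neg_abs_le _ |> neg_le.mp)) one_pos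

/-- A cell on which `e` does not vanish is contained in one of the two open half-spaces. -/
theorem pos_or_neg_of_ne_zero {F : Set (ι →₀ k)} {e x : ι →₀ k}
    (h : ∀ z, SameSigns F x z → pairing e z ≠ 0) :
    (∀ z, SameSigns F x z → 0 < pairing e z) ∨ ∀ z, SameSigns F x z → 0 < pairing (-e) z := by
  by_contra hcon
  push Not at hcon
  obtain ⟨⟨y, hxy, hy⟩, z, hxz, hz⟩ := hcon
  rw [pairing_neg_left, neg_nonpos] at hz
  have hy' : 0 < -(pairing e y)⁻¹ := neg_pos.mpr (inv_lt_zero.mpr (hy.lt_of_ne (h y hxy)))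
  have hz' : 0 < (pairing e z)⁻¹ := inv_pos.mpr (hz.lt_of_ne' (h z hxz))
  refine h (MulOpposite.op (-(pairing e y)⁻¹) • y + MulOpposite.op (pairing e z)⁻¹ • z)
    (fun a ha => ?_) ?_
  · have hza : SignType.sign (pairing a (MulOpposite.op (pairing e z)⁻¹ • z)) =
        SignType.sign (pairing a x) := by
      rw [pairing_op_smul, sign_mul, sign_pos hz', mul_one, hxz a ha]
    rw [pairing_add_right, pairing_op_smul, ← hza]
    exact sign_mul_add_eq hy' fun _ => hza.trans (hxy a ha)
  · rw [pairing_add_right, pairing_op_smul, pairing_op_smul, mul_neg,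
      mul_inv_cancel₀ (h y hxy), mul_inv_cancel₀ (h z hxz), neg_add_cancel]

/-- The open half-spaces `⟦e > 0⟧` and `⟦e < 0⟧` have approximants `p`, `n` in
`Op⁻(k^(I) ∪ D, k^(J))`. -/
theorem exists_approximants (I : Set ι) {D : Set (ι →₀ k)} (hD : D.Finite) (e : ι →₀ k) :
    ∃ p n : Set (ι →₀ k), MemOp (suppIn I ∪ D) p ∧ MemOp (suppIn I ∪ D) n ∧
      ∀ a b : Set (ι →₀ k), MemOpTop (suppIn I ∪ D) a → MemOpTop (suppIn I ∪ D) b →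
        (a ∩ {x | 0 < pairing e x} ⊆ b → a ∩ p ⊆ b) ∧
        (a ∩ {x | pairing e x < 0} ⊆ b → a ∩ n ⊆ b) ∧
        (a ⊆ b ∪ {x | 0 < pairing e x} → a ⊆ b ∪ p) ∧
        (a ⊆ b ∪ {x | pairing e x < 0} → a ⊆ b ∪ n) ∧
        (a ⊆ b ∪ {x | 0 < pairing e x} ∪ {x | pairing e x < 0} →
          a ⊆ b ∪ p ∪ n ∧ a ∩ (p ∩ n) ⊆ b) := by
  obtain ⟨F, hF, hFA, hsign⟩ := exists_finite_sameSigns I hD e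
  have h0 : (0 : ι →₀ k) ∈ suppIn I ∪ D := Or.inl fun _ _ => rfl
  refine ⟨posApprox F e, posApprox F (-e), memOp_posApprox h0 hF hFA e,
    memOp_posApprox h0 hF hFA (-e), fun a b ha hb => ?_⟩
  have transfer : ∀ x z, SameSigns F x z → x ∈ a → x ∉ b → ∃ y, y ∈ a ∧ y ∉ b ∧
      SignType.sign (pairing e y) = SignType.sign (pairing e z) := by
    intro x z hxz hxa hxb
    obtain ⟨y, hxy, hy⟩ := hsign x z hxz
    exact ⟨y, ha.mem_of_sameSigns hxy hxa,
      fun hyb => hxb (hb.mem_of_sameSigns (fun c hc => (hxy c hc).symm) hyb), hy⟩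
  refine ⟨fun h x hx => ?_, fun h x hx => ?_, fun h x hx => ?_, fun h x hx => ?_,
    fun h => ?_⟩
  · by_contra hxb
    obtain ⟨z, hxz, hz⟩ := exists_sameSigns_of_mem_posApprox hx.2
    obtain ⟨y, hya, hyb, hy⟩ := transfer x z hxz hx.1 hxb
    rw [sign_pos hz, sign_eq_one_iff] at hy
    exact hyb (h ⟨hya, hy⟩)
  · by_contra hxb
    obtain ⟨z, hxz, hz⟩ := exists_sameSigns_of_mem_posApprox hx.2
    obtain ⟨y, hya, hyb, hy⟩ := transfer x z hxz hx.1 hxb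
    rw [pairing_neg_left, neg_pos] at hz
    rw [sign_neg hz, sign_eq_neg_one_iff] at hy
    exact hyb (h ⟨hya, hy⟩)
  · by_contra hxb
    rw [Set.mem_union, not_or] at hxb
    refine hxb.2 (mem_posApprox fun z hxz => ?_)
    obtain ⟨y, hya, hyb, hy⟩ := transfer x z hxz hx hxb.1
    rwa [sign_pos ((h hya).resolve_left hyb), eq_comm, sign_eq_one_iff] at hy
  · by_contra hxb
    rw [Set.mem_union, not_or] at hxb
    refine hxb.2 (mem_posApprox fun z hxz => ?_)
    obtain ⟨y, hya, hyb, hy⟩ := transfer x z hxz hx hxb.1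
    rw [sign_neg ((h hya).resolve_left hyb), eq_comm, sign_eq_neg_one_iff] at hy
    rwa [pairing_neg_left, neg_pos]
  · have ne_zero_on_cell : ∀ x ∈ a, x ∉ b → ∀ z, SameSigns F x z → pairing e z ≠ 0 := by
      intro x hxa hxb z hxz hz
      obtain ⟨y, hya, hyb, hy⟩ := transfer x z hxz hxa hxb
      rw [hz, sign_zero, sign_eq_zero_iff] at hy
      rcases h hya with (hyb' | hpos) | hneg
      · exact hyb hyb'
      · exact hpos.ne' hy
      · exact hneg.ne hy
    refine ⟨fun x hx => ?_, fun x hx => ?_⟩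
    · by_cases hxb : x ∈ b
      · exact Or.inl (Or.inl hxb)
      · rcases pos_or_neg_of_ne_zero (ne_zero_on_cell x hx hxb) with hpos | hneg
        · exact Or.inl (Or.inr (mem_posApprox hpos))
        · exact Or.inr (mem_posApprox hneg)
    · by_contra hxb
      obtain ⟨y, hxy, hy⟩ := exists_sameSigns_of_mem_posApprox hx.2.1
      obtain ⟨z, hxz, hz⟩ := exists_sameSigns_of_mem_posApprox hx.2.2
      rcases pos_or_neg_of_ne_zero (ne_zero_on_cell x hx.1 hxb) with hpos | hneg
      · have := hpos z hxz
        rw [pairing_neg_left, neg_pos] at hz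
        exact lt_asymm hz this
      · have := hneg y hxy
        rw [pairing_neg_left, neg_pos] at this
        exact lt_asymm this hy

end Approximation

section Extension

variable {X K : Type*} [DistribLattice K]

/-- The values forced on the sets `a ∪ (b ∩ P) ∪ (c ∩ N)` by a homomorphism that extends `f`
and sends `P` to `u` and `N` to `v`. -/
def ExtValue (M : Set X → Prop) (f : Set X → K) (P N : Set X) (u v : K) (U : Set X) (l : K) :
    Prop :=
  ∃ a b c, M a ∧ M b ∧ M c ∧ U = a ∪ b ∩ P ∪ c ∩ N ∧ l = f a ⊔ f b ⊓ u ⊔ f c ⊓ v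

variable {M : Set X → Prop} {f : Set X → K} {P N : Set X} {u v : K}

theorem le_sup_inf_sup_inf {a x b c u v : K} (h₁ : a ≤ x ⊔ b ⊔ c) (h₂ : a ≤ x ⊔ b ⊔ v)
    (h₃ : a ≤ x ⊔ c ⊔ u) (h₄ : a ≤ x ⊔ u ⊔ v) : a ≤ x ⊔ b ⊓ u ⊔ c ⊓ v := by
  rw [sup_inf_left, sup_right_comm, sup_right_comm _ _ v, sup_inf_left, sup_inf_left]
  refine le_inf (le_inf ?_ ?_) (le_inf ?_ ?_)
  · exact h₁.trans (sup_right_comm _ _ _).le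
  · exact h₃
  · exact h₂.trans (sup_right_comm _ _ _).le
  · exact h₄.trans (sup_right_comm _ _ _).le

theorem ExtValue.mono (hM : ∀ U V, M U → M V → M (U ∪ V))
    (hf : ∀ U V, M U → M V → f (U ∪ V) = f U ⊔ f V) (hPN : Disjoint P N)
    (h₀ : ∀ a b, M a → M b → a ⊆ b → f a ≤ f b)
    (h₁ : ∀ a b, M a → M b → a ∩ P ⊆ b → f a ⊓ u ≤ f b)
    (h₂ : ∀ a b, M a → M b → a ∩ N ⊆ b → f a ⊓ v ≤ f b)
    (h₃ : ∀ a b, M a → M b → a ⊆ b ∪ P → f a ≤ f b ⊔ u)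
    (h₄ : ∀ a b, M a → M b → a ⊆ b ∪ N → f a ≤ f b ⊔ v)
    (h₅ : ∀ a b, M a → M b → a ⊆ b ∪ P ∪ N → f a ≤ f b ⊔ u ⊔ v)
    {U U' : Set X} {l l' : K} (hU : ExtValue M f P N u v U l)
    (hU' : ExtValue M f P N u v U' l') (hUU' : U ⊆ U') : l ≤ l' := by
  obtain ⟨a, b, c, ha, hb, hc, rfl, rfl⟩ := hU
  obtain ⟨a', b', c', ha', hb', hc', rfl, rfl⟩ := hU'
  rw [Set.union_subset_iff, Set.union_subset_iff] at hUU'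
  obtain ⟨⟨hUa, hUb⟩, hUc⟩ := hUU'
  have hab := hM a' b' ha' hb'
  have hac := hM a' c' ha' hc'
  refine sup_le (sup_le (le_sup_inf_sup_inf ?_ ?_ ?_ ?_) ?_) ?_
  · rw [← hf _ _ ha' hb', ← hf _ _ hab hc']
    refine h₀ _ _ ha (hM _ _ hab hc') fun x hx => ?_
    rcases hUa hx with (h | h) | h
    exacts [Or.inl (Or.inl h), Or.inl (Or.inr h.1), Or.inr h.1]
  · rw [← hf _ _ ha' hb']
    refine h₄ _ _ ha hab fun x hx => ?_
    rcases hUa hx with (h | h) | h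
    exacts [Or.inl (Or.inl h), Or.inl (Or.inr h.1), Or.inr h.2]
  · rw [← hf _ _ ha' hc']
    refine h₃ _ _ ha hac fun x hx => ?_
    rcases hUa hx with (h | h) | h
    exacts [Or.inl (Or.inl h), Or.inr h.2, Or.inl (Or.inr h.1)]
  · refine h₅ _ _ ha ha' fun x hx => ?_
    rcases hUa hx with (h | h) | h
    exacts [Or.inl (Or.inl h), Or.inl (Or.inr h.2), Or.inr h.2]
  · have h : f b ⊓ u ≤ f a' ⊔ f b' := by
      rw [← hf _ _ ha' hb']
      refine h₁ _ _ hb hab fun x hx => ?_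
      rcases hUb hx with (h | h) | h
      exacts [Or.inl h, Or.inr h.1, (Set.disjoint_left.mp hPN hx.2 h.2).elim]
    refine le_trans ?_ le_sup_left
    rw [sup_inf_left]
    exact le_inf h (inf_le_right.trans le_sup_right)
  · have h : f c ⊓ v ≤ f a' ⊔ f c' := by
      rw [← hf _ _ ha' hc']
      refine h₂ _ _ hc hac fun x hx => ?_
      rcases hUc hx with (h | h) | h
      exacts [Or.inl h, (Set.disjoint_left.mp hPN h.2 hx.2).elim, Or.inr h.1]
    rw [sup_right_comm]
    refine le_trans ?_ le_sup_left
    rw [sup_inf_left]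
    exact le_inf h (inf_le_right.trans le_sup_right)

theorem ExtValue.union (hM : ∀ U V, M U → M V → M (U ∪ V))
    (hf : ∀ U V, M U → M V → f (U ∪ V) = f U ⊔ f V) {U U' : Set X} {l l' : K}
    (hU : ExtValue M f P N u v U l) (hU' : ExtValue M f P N u v U' l') :
    ExtValue M f P N u v (U ∪ U') (l ⊔ l') := by
  obtain ⟨a, b, c, ha, hb, hc, rfl, rfl⟩ := hU
  obtain ⟨a', b', c', ha', hb', hc', rfl, rfl⟩ := hU'
  refine ⟨a ∪ a', b ∪ b', c ∪ c', hM _ _ ha ha', hM _ _ hb hb', hM _ _ hc hc', ?_, ?_⟩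
  · rw [Set.union_inter_distrib_right, Set.union_inter_distrib_right,
      Set.union_union_union_comm, Set.union_union_union_comm a]
  · rw [hf _ _ ha ha', hf _ _ hb hb', hf _ _ hc hc', inf_sup_right, inf_sup_right,
      sup_sup_sup_comm, sup_sup_sup_comm (f a)]

theorem normalForm_inf_normalForm [OrderBot K] {u v : K} (huv : u ⊓ v = ⊥)
    (a b c a' b' c' : K) :
    (a ⊔ b ⊓ u ⊔ c ⊓ v) ⊓ (a' ⊔ b' ⊓ u ⊔ c' ⊓ v) =
      a ⊓ a' ⊔ (a ⊓ b' ⊔ b ⊓ a' ⊔ b ⊓ b') ⊓ u ⊔ (a ⊓ c' ⊔ c ⊓ a' ⊔ c ⊓ c') ⊓ v := by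
  have h₁ : b ⊓ u ⊓ (c' ⊓ v) = ⊥ := by rw [inf_inf_inf_comm, huv, inf_bot_eq]
  have h₂ : c ⊓ v ⊓ (b' ⊓ u) = ⊥ := by rw [inf_inf_inf_comm, inf_comm v, huv, inf_bot_eq]
  have h₃ : b ⊓ u ⊓ (b' ⊓ u) = b ⊓ b' ⊓ u := by rw [inf_inf_inf_comm, inf_idem]
  have h₄ : c ⊓ v ⊓ (c' ⊓ v) = c ⊓ c' ⊓ v := by rw [inf_inf_inf_comm, inf_idem]
  simp only [inf_sup_left, inf_sup_right, h₁, h₂, h₃, h₄, sup_bot_eq]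
  simp only [inf_assoc, inf_comm u, inf_comm v]
  ac_rfl

theorem ExtValue.inter [OrderBot K] (hMu : ∀ U V, M U → M V → M (U ∪ V))
    (hMi : ∀ U V, M U → M V → M (U ∩ V))
    (hfu : ∀ U V, M U → M V → f (U ∪ V) = f U ⊔ f V)
    (hfi : ∀ U V, M U → M V → f (U ∩ V) = f U ⊓ f V)
    (hPN : P ∩ N = ∅) (huv : u ⊓ v = ⊥) {U U' : Set X} {l l' : K}
    (hU : ExtValue M f P N u v U l) (hU' : ExtValue M f P N u v U' l') :
    ExtValue M f P N u v (U ∩ U') (l ⊓ l') := by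
  obtain ⟨a, b, c, ha, hb, hc, rfl, rfl⟩ := hU
  obtain ⟨a', b', c', ha', hb', hc', rfl, rfl⟩ := hU'
  refine ⟨a ∩ a', a ∩ b' ∪ b ∩ a' ∪ b ∩ b', a ∩ c' ∪ c ∩ a' ∪ c ∩ c', ?_, ?_, ?_, ?_, ?_⟩
  · exact hMi _ _ ha ha'
  · exact hMu _ _ (hMu _ _ (hMi _ _ ha hb') (hMi _ _ hb ha')) (hMi _ _ hb hb')
  · exact hMu _ _ (hMu _ _ (hMi _ _ ha hc') (hMi _ _ hc ha')) (hMi _ _ hc hc')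
  · exact normalForm_inf_normalForm (K := Set X) hPN a b c a' b' c'
  · rw [normalForm_inf_normalForm huv,
      hfu _ _ (hMu _ _ (hMi _ _ ha hb') (hMi _ _ hb ha')) (hMi _ _ hb hb'),
      hfu _ _ (hMi _ _ ha hb') (hMi _ _ hb ha'),
      hfu _ _ (hMu _ _ (hMi _ _ ha hc') (hMi _ _ hc ha')) (hMi _ _ hc hc'),
      hfu _ _ (hMi _ _ ha hc') (hMi _ _ hc ha'),
      hfi _ _ ha ha', hfi _ _ ha hb', hfi _ _ hb ha', hfi _ _ hb hb',
      hfi _ _ ha hc', hfi _ _ hc ha', hfi _ _ hc hc']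

end Extension

/-- In a completely normal lattice, two elements can be shrunk to disjoint ones without changing
them modulo each other. -/
theorem exists_disjoint_refinement {L : Type*} [DistribLattice L] [OrderBot L]
    (hcn : ∀ a b : L, ∃ x y : L, a ⊔ b = a ⊔ y ∧ a ⊔ b = x ⊔ b ∧ x ⊓ y = ⊥) (p n : L) :
    ∃ u v : L, u ≤ p ∧ v ≤ n ∧ p ≤ u ⊔ n ∧ n ≤ v ⊔ p ∧ u ⊓ v = ⊥ := by
  obtain ⟨x, y, hy, hx, hxy⟩ := hcn p n
  refine ⟨x ⊓ p, y ⊓ n, inf_le_right, inf_le_right, ?_, ?_, ?_⟩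
  · rw [sup_inf_right, ← hx]
    exact le_inf le_sup_left le_sup_left
  · rw [sup_inf_right, sup_comm y, ← hy]
    exact le_inf le_sup_right le_sup_left
  · rw [inf_inf_inf_comm, hxy, bot_inf_eq]

/-- domain step: with `J = ι`, `I ⊆ J`, `L` a completely normal
distributive `0`-lattice, `D ⊆ k^(J)` finite and `e ∈ k^(J)`, every top-faithful
`0`-lattice homomorphism `f : Op(k^(I) ∪ D, k^(J)) → L ∪ {∞}` extends to a top-faithful
lattice homomorphism `g : Op(k^(I) ∪ D ∪ {e}, k^(J)) → L ∪ {∞}`.  Here `L ∪ {∞}` is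
`WithTop L`, and top-faithfulness means that the only member of the domain lattice sent
to `∞` is the top element `k^(J)` (= `Set.univ`). -/
theorem stmt15 (k ι : Type*) [DivisionRing k] [LinearOrder k]
    [CovariantClass k k (· + ·) (· < ·)] [PosMulStrictMono k] [MulPosStrictMono k]
    (I : Set ι)
    (L : Type*) [DistribLattice L] [OrderBot L]
    (hcn : ∀ a b : L, ∃ x y : L, a ⊔ b = a ⊔ y ∧ a ⊔ b = x ⊔ b ∧ x ⊓ y = ⊥)
    (D : Set (ι →₀ k)) (hD : D.Finite) (e : ι →₀ k)
    (f : Set (ι →₀ k) → WithTop L)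
    (hf : ∀ U V : Set (ι →₀ k), MemOpTop (suppIn I ∪ D) U → MemOpTop (suppIn I ∪ D) V →
      f (U ∪ V) = f U ⊔ f V ∧ f (U ∩ V) = f U ⊓ f V)
    (hf0 : f ∅ = ⊥)
    (hftf : ∀ U : Set (ι →₀ k), MemOpTop (suppIn I ∪ D) U → (f U = ⊤ ↔ U = Set.univ)) :
    ∃ g : Set (ι →₀ k) → WithTop L,
      (∀ U V : Set (ι →₀ k),
        MemOpTop (suppIn I ∪ D ∪ {e}) U → MemOpTop (suppIn I ∪ D ∪ {e}) V →
        g (U ∪ V) = g U ⊔ g V ∧ g (U ∩ V) = g U ⊓ g V) ∧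
      (∀ U : Set (ι →₀ k), MemOpTop (suppIn I ∪ D ∪ {e}) U → (g U = ⊤ ↔ U = Set.univ)) ∧
      (∀ U : Set (ι →₀ k), MemOpTop (suppIn I ∪ D) U → g U = f U) := by
  have : IsStrictOrderedRing k := isStrictOrderedRing_of_covariantClass
  obtain ⟨p, n, hp, hn, hpn⟩ := exists_approximants I hD e
  have ne_univ : ∀ {U : Set (ι →₀ k)}, MemOp (suppIn I ∪ D) U → U ≠ Set.univ :=
    fun hU h => hU.zero_notMem (h ▸ Set.mem_univ _)
  obtain ⟨p', hp'⟩ := WithTop.ne_top_iff_exists.mp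
    (fun h => ne_univ hp ((hftf p (Or.inl hp)).mp h))
  obtain ⟨n', hn'⟩ := WithTop.ne_top_iff_exists.mp
    (fun h => ne_univ hn ((hftf n (Or.inl hn)).mp h))
  obtain ⟨u', v', hup, hvn, hpu, hnv, huv⟩ := exists_disjoint_refinement hcn p' n'
  obtain ⟨u, hu⟩ : ∃ u : WithTop L, u = u' := ⟨_, rfl⟩
  obtain ⟨v, hv⟩ : ∃ v : WithTop L, v = v' := ⟨_, rfl⟩
  replace hup : u ≤ f p := by rw [hu, ← hp']; exact WithTop.coe_le_coe.mpr hup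
  replace hvn : v ≤ f n := by rw [hv, ← hn']; exact WithTop.coe_le_coe.mpr hvn
  replace hpu : f p ≤ u ⊔ f n := by
    rw [hu, ← hp', ← hn', ← WithTop.coe_sup]; exact WithTop.coe_le_coe.mpr hpu
  replace hnv : f n ≤ v ⊔ f p := by
    rw [hv, ← hp', ← hn', ← WithTop.coe_sup]; exact WithTop.coe_le_coe.mpr hnv
  replace huv : u ⊓ v = ⊥ := by rw [hu, hv, ← WithTop.coe_inf, huv, WithTop.coe_bot]
  have hu_top : u ≠ ⊤ := hu ▸ WithTop.coe_ne_top
  have hv_top : v ≠ ⊤ := hv ▸ WithTop.coe_ne_top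
  clear hu hv hp' hn'
  replace hp : MemOpTop (suppIn I ∪ D) p := Or.inl hp
  replace hn : MemOpTop (suppIn I ∪ D) n := Or.inl hn
  set M := MemOpTop (suppIn I ∪ D) with hM
  set P : Set (ι →₀ k) := {x | 0 < pairing e x} with hP
  set N : Set (ι →₀ k) := {x | pairing e x < 0} with hN
  have hMu : ∀ U V, M U → M V → M (U ∪ V) := fun _ _ => MemOpTop.union
  have hMi : ∀ U V, M U → M V → M (U ∩ V) := fun _ _ => MemOpTop.inter
  have hfu : ∀ U V, M U → M V → f (U ∪ V) = f U ⊔ f V := fun U V hU hV => (hf U V hU hV).1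
  have hfi : ∀ U V, M U → M V → f (U ∩ V) = f U ⊓ f V := fun U V hU hV => (hf U V hU hV).2
  have hPN : P ∩ N = ∅ := Set.eq_empty_of_forall_notMem fun x hx => lt_asymm hx.1 hx.2
  have hempty : M ∅ := Or.inl (MemOp.empty (Or.inl fun _ _ => rfl))
  have huniv : M Set.univ := Or.inr rfl
  have hf_univ : f Set.univ = ⊤ := (hftf _ huniv).mpr rfl
  have hmono : ∀ a b, M a → M b → a ⊆ b → f a ≤ f b := fun a b ha hb hab =>
    sup_eq_right.mp (by rw [← hfu a b ha hb, Set.union_eq_self_of_subset_left hab])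
  have hinfp : ∀ a b, M a → M b → a ∩ P ⊆ b → f a ⊓ f p ≤ f b := fun a b ha hb h => by
    rw [← hfi a p ha hp]
    exact hmono _ _ (hMi _ _ ha hp) hb ((hpn a b ha hb).1 h)
  have hinfn : ∀ a b, M a → M b → a ∩ N ⊆ b → f a ⊓ f n ≤ f b := fun a b ha hb h => by
    rw [← hfi a n ha hn]
    exact hmono _ _ (hMi _ _ ha hn) hb ((hpn a b ha hb).2.1 h)
  have h₃ : ∀ a b, M a → M b → a ⊆ b ∪ P → f a ≤ f b ⊔ u := by
    intro a b ha hb h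
    have hab : f a ≤ f b ⊔ f p := by
      rw [← hfu b p hb hp]
      exact hmono _ _ ha (hMu _ _ hb hp) ((hpn a b ha hb).2.2.1 h)
    have han : f a ⊓ f n ≤ f b := hinfn a b ha hb fun x hx =>
      (h hx.1).resolve_right fun hxP => lt_asymm hxP hx.2
    calc f a ≤ f a ⊓ (f b ⊔ (u ⊔ f n)) := le_inf le_rfl (hab.trans (sup_le_sup_left hpu _))
      _ = f a ⊓ (f b ⊔ u) ⊔ f a ⊓ f n := by rw [← sup_assoc, inf_sup_left]
      _ ≤ f b ⊔ u := sup_le inf_le_right (han.trans le_sup_left)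
  have h₄ : ∀ a b, M a → M b → a ⊆ b ∪ N → f a ≤ f b ⊔ v := by
    intro a b ha hb h
    have hab : f a ≤ f b ⊔ f n := by
      rw [← hfu b n hb hn]
      exact hmono _ _ ha (hMu _ _ hb hn) ((hpn a b ha hb).2.2.2.1 h)
    have hap : f a ⊓ f p ≤ f b := hinfp a b ha hb fun x hx =>
      (h hx.1).resolve_right fun hxN => lt_asymm hx.2 hxN
    calc f a ≤ f a ⊓ (f b ⊔ (v ⊔ f p)) := le_inf le_rfl (hab.trans (sup_le_sup_left hnv _))
      _ = f a ⊓ (f b ⊔ v) ⊔ f a ⊓ f p := by rw [← sup_assoc, inf_sup_left]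
      _ ≤ f b ⊔ v := sup_le inf_le_right (hap.trans le_sup_left)
  have h₅ : ∀ a b, M a → M b → a ⊆ b ∪ P ∪ N → f a ≤ f b ⊔ u ⊔ v := by
    intro a b ha hb h
    obtain ⟨hab, hapn⟩ := (hpn a b ha hb).2.2.2.2 h
    have hab' : f a ≤ f b ⊔ f p ⊔ f n := by
      rw [← hfu b p hb hp, ← hfu _ n (hMu _ _ hb hp) hn]
      exact hmono _ _ ha (hMu _ _ (hMu _ _ hb hp) hn) hab
    have hapn' : f a ⊓ (f p ⊓ f n) ≤ f b := by
      rw [← hfi p n hp hn, ← hfi a _ ha (hMi _ _ hp hn)]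
      exact hmono _ _ (hMi _ _ ha (hMi _ _ hp hn)) hb hapn
    have hsplit : f p ⊔ f n ≤ u ⊔ v ⊔ f p ⊓ f n := by
      rw [sup_inf_left]
      refine sup_le (le_inf le_sup_right ?_) (le_inf ?_ le_sup_right)
      · exact hpu.trans (sup_le_sup_right le_sup_left _)
      · exact hnv.trans (sup_le_sup_right le_sup_right _)
    calc f a ≤ f a ⊓ (f b ⊔ (u ⊔ v ⊔ f p ⊓ f n)) :=
          le_inf le_rfl (hab'.trans (by rw [sup_assoc]; exact sup_le_sup_left hsplit _))
      _ = f a ⊓ (f b ⊔ u ⊔ v) ⊔ f a ⊓ (f p ⊓ f n) := by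
          rw [← sup_assoc, inf_sup_left, ← sup_assoc]
      _ ≤ f b ⊔ u ⊔ v := sup_le inf_le_right (hapn'.trans (le_sup_left.trans le_sup_left))
  have mono {U U' l l'} (hU : ExtValue M f P N u v U l) (hU' : ExtValue M f P N u v U' l')
      (hUU' : U ⊆ U') : l ≤ l' :=
    ExtValue.mono hMu hfu (Set.disjoint_iff_inter_eq_empty.mpr hPN) hmono
      (fun a b ha hb h => (inf_le_inf_left _ hup).trans (hinfp a b ha hb h))
      (fun a b ha hb h => (inf_le_inf_left _ hvn).trans (hinfn a b ha hb h))
      h₃ h₄ h₅ hU hU' hUU'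
  have value_of_M {U} (hU : M U) : ExtValue M f P N u v U (f U) :=
    ⟨U, ∅, ∅, hU, hempty, hempty, by simp, by simp [hf0]⟩
  have value_of_memOp {U} (hU : MemOp (suppIn I ∪ D ∪ {e}) U) :
      ∃ l, ExtValue M f P N u v U l := by
    induction hU with
    | pos a ha =>
      rcases ha with ha | rfl
      · exact ⟨_, value_of_M (Or.inl (MemOp.pos a ha))⟩
      · exact ⟨u, ∅, Set.univ, ∅, hempty, huniv, hempty, by simp [hP], by simp [hf0, hf_univ]⟩
    | neg a ha =>
      rcases ha with ha | rfl
      · exact ⟨_, value_of_M (Or.inl (MemOp.neg a ha))⟩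
      · exact ⟨v, ∅, ∅, Set.univ, hempty, hempty, huniv, by simp [hN], by simp [hf0, hf_univ]⟩
    | union _ _ ihU ihV =>
      obtain ⟨l, hl⟩ := ihU
      obtain ⟨l', hl'⟩ := ihV
      exact ⟨_, hl.union hMu hfu hl'⟩
    | inter _ _ ihU ihV =>
      obtain ⟨l, hl⟩ := ihU
      obtain ⟨l', hl'⟩ := ihV
      exact ⟨_, hl.inter hMu hMi hfu hfi hPN huv hl'⟩
  have hvalue : ∀ U, ∃ l, MemOpTop (suppIn I ∪ D ∪ {e}) U → ExtValue M f P N u v U l := by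
    intro U
    by_cases hU : MemOpTop (suppIn I ∪ D ∪ {e}) U
    · obtain ⟨l, hl⟩ : ∃ l, ExtValue M f P N u v U l := by
        rcases hU with hU | rfl
        · exact value_of_memOp hU
        · exact ⟨_, value_of_M huniv⟩
      exact ⟨l, fun _ => hl⟩
    · exact ⟨⊥, fun h => absurd h hU⟩
  choose g hg using hvalue
  have unique {U l l'} (hl : ExtValue M f P N u v U l) (hl' : ExtValue M f P N u v U l') :
      l = l' := le_antisymm (mono hl hl' subset_rfl) (mono hl' hl subset_rfl)
  have lift {U} (hU : M U) : MemOpTop (suppIn I ∪ D ∪ {e}) U :=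
    hU.imp_left fun h => h.mono Set.subset_union_left
  refine ⟨g, fun U V hU hV => ⟨?_, ?_⟩, fun U hU => ⟨fun h => ?_, ?_⟩, fun U hU => ?_⟩
  · exact unique (hg _ (hU.union hV)) ((hg U hU).union hMu hfu (hg V hV))
  · exact unique (hg _ (hU.inter hV)) ((hg U hU).inter hMu hMi hfu hfi hPN huv (hg V hV))
  · obtain ⟨a, b, c, ha, -, -, rfl, hl⟩ := hg U hU
    rw [h] at hl
    have ha_top : f a = ⊤ := by
      by_contra hne
      have hlt : f a ⊔ f b ⊓ u ⊔ f c ⊓ v < ⊤ := by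
        obtain ⟨a', ha'⟩ := WithTop.ne_top_iff_exists.mp hne
        obtain ⟨b', hb'⟩ := WithTop.ne_top_iff_exists.mp
          (ne_top_of_le_ne_top hu_top (inf_le_right : f b ⊓ u ≤ u))
        obtain ⟨c', hc'⟩ := WithTop.ne_top_iff_exists.mp
          (ne_top_of_le_ne_top hv_top (inf_le_right : f c ⊓ v ≤ v))
        rw [← ha', ← hb', ← hc', ← WithTop.coe_sup, ← WithTop.coe_sup]
        exact WithTop.coe_lt_top _
      exact hlt.ne hl.symm
    rw [(hftf a ha).mp ha_top, Set.univ_union, Set.univ_union]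
  · rintro rfl
    rw [← hf_univ]
    exact unique (hg _ hU) (value_of_M huniv)
  · exact unique (hg U (lift hU)) (value_of_M hU)
end
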